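/- arXiv:2404.05864 — 3 statements merged into one kernel-verified Lean document; each statement's English description precedes it below -/
import Mathlib

section
/- There exists an absolute constant C > 0 such that the following holds for all integers n ≥ 3, k ≥ 1 and all δ ∈ (0,1): if there exists a binary linear (3,δ)-LCC of block length n and dimension k, then k ≤ C · δ^{-2} · (log₂ n)² · log₂ log₂ n. -/
/-- A binary linear `(r, δ)`-LCC of block length `n` and dimension `k`:
a full-rank matrix whose rows `v 1, …, v n ∈ F₂ᵏ` span `F₂ᵏ`, together with
`r`-uniform matchings `H i` over `[n]` (families of pairwise disjoint
`r`-element subsets of `[n]`) of size at least `δ·n`, such that each hyperedge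
`{a₁,…,a_r} ∈ H i` satisfies `v i = v a₁ + ⋯ + v a_r`. -/
def IsBinaryLCC (r : ℕ) (δ : ℝ) {n k : ℕ} (v : Fin n → Fin k → ZMod 2)
    (H : Fin n → Finset (Finset (Fin n))) : Prop :=
  Submodule.span (ZMod 2) (Set.range v) = ⊤ ∧
  (∀ i : Fin n, ∀ e ∈ H i, e.card = r) ∧
  (∀ i : Fin n, ∀ e ∈ H i, ∀ e' ∈ H i, e ≠ e' → Disjoint e e') ∧
  (∀ i : Fin n, δ * n ≤ ((H i).card : ℝ)) ∧
  (∀ i : Fin n, ∀ e ∈ H i, v i = ∑ a ∈ e, v a)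

/-- Sum of a set function over all permutations of a set. -/
noncomputable def permSum {ι : Type*} [Fintype ι] [DecidableEq ι]
    (F : Finset ι → ℝ) (B : Finset ι) : ℝ :=
  ∑ σ : Equiv.Perm ι, F (B.map σ.toEmbedding)

theorem permSum_congr {ι : Type*} [Fintype ι] [DecidableEq ι]
    (F : Finset ι → ℝ) {B B' : Finset ι} (h : B.card = B'.card) :
    permSum F B = permSum F B' := by
  classical
  obtain ⟨π, hπ⟩ : ∃ π : Equiv.Perm ι, B.map π.toEmbedding = B' := by
    let e : {x // x ∈ B} ≃ {x // x ∈ B'} := Finset.equivOfCardEq h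
    refine ⟨e.extendSubtype, ?_⟩
    apply Finset.eq_of_subset_of_card_le
    · intro x hx
      simp only [Finset.mem_map, Equiv.coe_toEmbedding] at hx
      obtain ⟨y, hy, rfl⟩ := hx
      exact e.extendSubtype_mem y hy
    · rw [Finset.card_map, h]
  unfold permSum
  rw [← Equiv.sum_comp (Equiv.mulRight π)]
  apply Finset.sum_congr rfl
  intro σ _
  congr 1
  rw [← hπ, Finset.map_map]
  congr 1

theorem permSum_anti {ι : Type*} [Fintype ι] [DecidableEq ι]
    (F : Finset ι → ℝ) (hF : ∀ Q Q', Q ⊆ Q' → F Q' ≤ F Q) {B B' : Finset ι} (h : B ⊆ B') :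
    permSum F B' ≤ permSum F B :=
  Finset.sum_le_sum fun _ _ => hF _ _ (Finset.map_subset_map.2 h)

theorem permSum_step {ι : Type*} [Fintype ι] [DecidableEq ι]
    (F : Finset ι → ℝ) (hF : ∀ Q Q', Q ⊆ Q' → F Q' ≤ F Q) (a b : ℝ) (ha : 0 ≤ a)
    (hloc : ∀ Q, a * F Q - b ≤ ∑ i ∈ Qᶜ, (F Q - F (insert i Q)) +
      ∑ i ∈ Q, (F (Q.erase i) - F Q))
    (B : Finset ι) (r₁ r₂ : ι) (h₁ : r₁ ∉ B) (h₂ : r₂ ∉ insert r₁ B) :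
    a * permSum F (insert r₂ (insert r₁ B)) - b * (Fintype.card (Equiv.Perm ι)) ≤
      Fintype.card ι * (permSum F B - permSum F (insert r₂ (insert r₁ B))) := by
  classical
  set B₁ := insert r₁ B with hB₁
  set B₂ := insert r₂ B₁ with hB₂
  have hc1 : B₁.card = B.card + 1 := Finset.card_insert_of_notMem h₁
  have hc2 : B₂.card = B₁.card + 1 := Finset.card_insert_of_notMem h₂
  have m1 : permSum F B₁ ≤ permSum F B := permSum_anti F hF (Finset.subset_insert _ _)
  have m2 : permSum F B₂ ≤ permSum F B₁ := permSum_anti F hF (Finset.subset_insert _ _)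
  have key : a * permSum F B₁ - b * (Fintype.card (Equiv.Perm ι)) ≤
      ∑ σ : Equiv.Perm ι, (∑ i ∈ (B₁.map σ.toEmbedding)ᶜ, (F (B₁.map σ.toEmbedding) -
        F (insert i (B₁.map σ.toEmbedding))) +
      ∑ i ∈ (B₁.map σ.toEmbedding), (F ((B₁.map σ.toEmbedding).erase i) -
        F (B₁.map σ.toEmbedding))) := by
    have := Finset.sum_le_sum (s := (Finset.univ : Finset (Equiv.Perm ι)))
      (fun σ _ => hloc (B₁.map σ.toEmbedding))
    refine le_trans (le_of_eq ?_) this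
    rw [Finset.sum_sub_distrib, ← Finset.mul_sum]
    simp only [permSum, Finset.sum_const, Finset.card_univ, nsmul_eq_mul]
    ring
  have e1 : ∀ σ : Equiv.Perm ι, ∑ i ∈ (B₁.map σ.toEmbedding)ᶜ, (F (B₁.map σ.toEmbedding) -
        F (insert i (B₁.map σ.toEmbedding))) =
      ∑ r ∈ B₁ᶜ, (F (B₁.map σ.toEmbedding) - F ((insert r B₁).map σ.toEmbedding)) := by
    intro σ
    have : (B₁.map σ.toEmbedding)ᶜ = B₁ᶜ.map σ.toEmbedding := by
      ext x; simp [Finset.mem_map_equiv]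
    rw [this, Finset.sum_map]
    simp [Finset.map_insert]
  have e2 : ∀ σ : Equiv.Perm ι, ∑ i ∈ (B₁.map σ.toEmbedding), (F ((B₁.map σ.toEmbedding).erase i) -
        F (B₁.map σ.toEmbedding)) =
      ∑ r ∈ B₁, (F ((B₁.erase r).map σ.toEmbedding) - F (B₁.map σ.toEmbedding)) := by
    intro σ
    rw [Finset.sum_map]
    simp [Finset.map_erase]
  have key2 : ∑ σ : Equiv.Perm ι, (∑ i ∈ (B₁.map σ.toEmbedding)ᶜ, (F (B₁.map σ.toEmbedding) -
        F (insert i (B₁.map σ.toEmbedding))) +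
      ∑ i ∈ (B₁.map σ.toEmbedding), (F ((B₁.map σ.toEmbedding).erase i) -
        F (B₁.map σ.toEmbedding))) =
      ∑ r ∈ B₁ᶜ, (permSum F B₁ - permSum F (insert r B₁)) +
      ∑ r ∈ B₁, (permSum F (B₁.erase r) - permSum F B₁) := by
    rw [Finset.sum_add_distrib]
    simp_rw [e1, e2]
    rw [Finset.sum_comm, Finset.sum_comm (t := B₁)]
    simp only [permSum, Finset.sum_sub_distrib]
  have f1 : ∑ r ∈ B₁ᶜ, (permSum F B₁ - permSum F (insert r B₁)) =
      (B₁ᶜ.card : ℝ) * (permSum F B₁ - permSum F B₂) := by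
    rw [← nsmul_eq_mul, ← Finset.sum_const]
    apply Finset.sum_congr rfl
    intro r hr
    rw [permSum_congr F (B := insert r B₁) (B' := B₂)]
    rw [Finset.card_insert_of_notMem (by simpa using hr), hc2]
  have f2 : ∑ r ∈ B₁, (permSum F (B₁.erase r) - permSum F B₁) =
      (B₁.card : ℝ) * (permSum F B - permSum F B₁) := by
    rw [← nsmul_eq_mul, ← Finset.sum_const]
    apply Finset.sum_congr rfl
    intro r hr
    rw [permSum_congr F (B := B₁.erase r) (B' := B)]
    rw [Finset.card_erase_of_mem hr]; omega
  rw [key2, f1, f2] at key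
  have hcc : (B₁ᶜ.card : ℝ) + B₁.card = Fintype.card ι := by
    rw [← Finset.card_compl_add_card B₁]; push_cast; ring
  have n1 : (0:ℝ) ≤ B₁ᶜ.card := Nat.cast_nonneg _
  have n2 : (0:ℝ) ≤ B₁.card := Nat.cast_nonneg _
  rw [← hcc]
  nlinarith [mul_le_mul_of_nonneg_left m2 ha, mul_nonneg n1 (sub_nonneg.2 m1),
    mul_nonneg n2 (sub_nonneg.2 m2)]

theorem permSum_decay {ι : Type*} [Fintype ι] [DecidableEq ι] [Nonempty ι]
    (F : Finset ι → ℝ) (hF : ∀ Q Q', Q ⊆ Q' → F Q' ≤ F Q) (a b M : ℝ) (ha : 0 < a)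
    (hloc : ∀ Q, a * F Q - b ≤ ∑ i ∈ Qᶜ, (F Q - F (insert i Q)) +
      ∑ i ∈ Q, (F (Q.erase i) - F Q)) (hM : F ∅ ≤ M) (hb : 0 ≤ b) (r : ℕ) :
    ∀ B : Finset ι, B.card = 2 * r → 
    (1 + a / Fintype.card ι) ^ r * (permSum F B - b / a * Fintype.card (Equiv.Perm ι)) ≤
      M * Fintype.card (Equiv.Perm ι) := by
  have hτ : (0:ℝ) < Fintype.card ι := by exact_mod_cast Fintype.card_pos
  have hN : (0:ℝ) < Fintype.card (Equiv.Perm ι) := by exact_mod_cast Fintype.card_pos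
  induction r with
  | zero =>
    intro B hB
    have : B = ∅ := by simpa using hB
    subst this
    have h1 : permSum F ∅ = F ∅ * Fintype.card (Equiv.Perm ι) := by
      simp [permSum, mul_comm]
    rw [h1]
    have := mul_le_mul_of_nonneg_right hM hN.le
    have : 0 ≤ b / a * Fintype.card (Equiv.Perm ι) := by positivity
    linarith
  | succ r ih =>
    intro B hB
    obtain ⟨r₂, B₁, h₂, rfl, hc⟩ := Finset.card_eq_succ.1 (show B.card = (2 * r + 1) + 1 by omega)
    obtain ⟨r₁, B₀, h₁, rfl, hc0⟩ := Finset.card_eq_succ.1 hc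
    have st := permSum_step F hF a b ha.le hloc B₀ r₁ r₂ h₁ h₂
    have := ih B₀ hc0
    refine le_trans ?_ this
    rw [pow_succ, mul_assoc]
    apply mul_le_mul_of_nonneg_left _ (by positivity)
    set p := permSum F (insert r₂ (insert r₁ B₀))
    set q := permSum F B₀
    set N : ℝ := ((Fintype.card (Equiv.Perm ι) : ℕ) : ℝ)
    set τ : ℝ := ((Fintype.card ι : ℕ) : ℝ)
    have : (a * p - b * N) / τ ≤ q - p := by
      rw [div_le_iff₀ hτ]; linarith
    have e : (1 + a / τ) * (p - b / a * N) = p - b / a * N + (a * p - b * N) / τ := by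
      field_simp
    rw [e]; linarith

theorem exists_disjoint_blocks {ι : Type*} [Fintype ι] [DecidableEq ι] [Nonempty ι]
    (F : Fin 6 → Finset ι → ℝ) (hF : ∀ j Q Q', Q ⊆ Q' → F j Q' ≤ F j Q) (a b M : ℝ) (ha : 0 < a)
    (hloc : ∀ j Q, a * F j Q - b ≤ ∑ i ∈ Qᶜ, (F j Q - F j (insert i Q)) +
      ∑ i ∈ Q, (F j (Q.erase i) - F j Q)) (hM : ∀ j, F j ∅ ≤ M) (hb : 0 ≤ b) (r : ℕ)
    (hr : 12 * r ≤ Fintype.card ι) :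
    ∃ Q : Fin 6 → Finset ι, (∀ j j', j ≠ j' → Disjoint (Q j) (Q j')) ∧
      ∑ j, F j (Q j) ≤ 6 * (b / a + M / (1 + a / Fintype.card ι) ^ r) := by
  have hτ : (0:ℝ) < Fintype.card ι := by exact_mod_cast Fintype.card_pos
  have hN : (0:ℝ) < Fintype.card (Equiv.Perm ι) := by exact_mod_cast Fintype.card_pos
  obtain ⟨f⟩ : Nonempty (Fin 6 × Fin (2 * r) ↪ ι) := by
    apply Function.Embedding.nonempty_of_card_le
    simp; omega
  let B : Fin 6 → Finset ι := fun j => (Finset.univ : Finset (Fin (2 * r))).map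
    ⟨fun x => f (j, x), fun x y h => by simpa using f.injective h⟩
  have hBc : ∀ j, (B j).card = 2 * r := by intro j; simp [B]
  have hBd : ∀ j j', j ≠ j' → Disjoint (B j) (B j') := by
    intro j j' hj
    rw [Finset.disjoint_left]
    intro x hx hx'
    simp only [B, Finset.mem_map, Finset.mem_univ, true_and] at hx hx'
    obtain ⟨y, rfl⟩ := hx
    obtain ⟨y', h⟩ := hx'
    have := f.injective h
    simp at this
    exact hj this.1.symm
  set K := b / a + M / (1 + a / Fintype.card ι) ^ r with hK
  have hp : ∀ j, permSum (F j) (B j) ≤ K * Fintype.card (Equiv.Perm ι) := by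
    intro j
    have := permSum_decay (F j) (hF j) a b M ha (hloc j) (hM j) hb r (B j) (hBc j)
    have hpos : 0 < (1 + a / Fintype.card ι : ℝ) ^ r := by positivity
    rw [mul_comm, ← le_div_iff₀ hpos] at this
    rw [hK, add_mul]
    have e : M / (1 + a / Fintype.card ι : ℝ) ^ r * Fintype.card (Equiv.Perm ι) =
      M * Fintype.card (Equiv.Perm ι) / (1 + a / Fintype.card ι : ℝ) ^ r := by ring
    rw [e]; linarith
  have hs : ∑ σ : Equiv.Perm ι, ∑ j, F j ((B j).map σ.toEmbedding) ≤
      ∑ σ : Equiv.Perm ι, 6 * K := by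
    rw [Finset.sum_comm]
    calc _ ≤ ∑ j : Fin 6, K * Fintype.card (Equiv.Perm ι) := Finset.sum_le_sum fun j _ => hp j
      _ = _ := by simp only [Finset.sum_const, Finset.card_univ, nsmul_eq_mul, Fintype.card_fin]; push_cast; ring
  obtain ⟨σ, -, hσ⟩ := Finset.exists_le_of_sum_le Finset.univ_nonempty hs
  refine ⟨fun j => (B j).map σ.toEmbedding, fun j j' hj => ?_, hσ⟩
  exact (Finset.disjoint_map _).2 (hBd j j' hj)

open Classical in
/-- The vertices `z` of `P` such that `v x + v z` is a sum of some `u i`, `i ∈ T ⊆ Q`,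
and of at most `|T|` further vectors `v c`. -/
noncomputable def reach {ι α V : Type*} [AddCommGroup V] (u : ι → V) (v : α → V)
    (P : Finset α) (x : α) (Q : Finset ι) : Finset α :=
  P.filter fun z => ∃ T ⊆ Q, ∃ C : Multiset α, C.card ≤ T.card ∧
    v x + v z = ∑ i ∈ T, u i + (C.map v).sum

theorem reach_mono {ι α V : Type*} [AddCommGroup V] (u : ι → V) (v : α → V)
    (P : Finset α) (x : α) {Q Q' : Finset ι} (h : Q ⊆ Q') :
    reach u v P x Q ⊆ reach u v P x Q' := by
  intro z hz
  simp only [reach, Finset.mem_filter] at hz ⊢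
  obtain ⟨hz, T, hT, C, hC⟩ := hz
  exact ⟨hz, T, hT.trans h, C, hC⟩

theorem self_mem_reach {ι α V : Type*} [AddCommGroup V] (h2 : ∀ y : V, y + y = 0)
    (u : ι → V) (v : α → V) (P : Finset α) (x : α) (hx : x ∈ P) (Q : Finset ι) :
    x ∈ reach u v P x Q := by
  simp only [reach, Finset.mem_filter]
  exact ⟨hx, ∅, Finset.empty_subset _, 0, by simp, by simp [h2]⟩

theorem reach_step {ι α V : Type*} [DecidableEq ι] [DecidableEq α] [AddCommGroup V]
    (h2 : ∀ y : V, y + y = 0) (u : ι → V) (v : α → V) (P : Finset α) (x : α) (Q : Finset ι)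
    (i : ι) (hi : i ∉ Q) (e : Finset α) (he : e.card = 3) (hu : u i = ∑ a ∈ e, v a)
    (z w : α) (hz : z ∈ e) (hw : w ∈ e) (hwP : w ∈ P) (hzr : z ∈ reach u v P x Q) :
    w ∈ reach u v P x (insert i Q) := by
  by_cases hzw : w = z
  · subst hzw; exact reach_mono u v P x (Finset.subset_insert _ _) hzr
  have h1 : ((e.erase z).erase w).card = 1 := by
    rw [Finset.card_erase_of_mem (Finset.mem_erase.2 ⟨hzw, hw⟩), Finset.card_erase_of_mem hz, he]
  obtain ⟨c, hc⟩ := Finset.card_eq_one.1 h1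
  have hsum : u i = v z + (v w + v c) := by
    rw [hu, ← Finset.add_sum_erase _ _ hz, ← Finset.add_sum_erase _ _ (Finset.mem_erase.2 ⟨hzw, hw⟩),
      hc, Finset.sum_singleton]
  simp only [reach, Finset.mem_filter] at hzr ⊢
  obtain ⟨_, T, hT, C, hC, hS⟩ := hzr
  have hiT : i ∉ T := fun h => hi (hT h)
  refine ⟨hwP, insert i T, Finset.insert_subset_insert _ hT, c ::ₘ C, ?_, ?_⟩
  · rw [Finset.card_insert_of_notMem hiT]; simpa using hC
  · rw [Finset.sum_insert hiT, Multiset.map_cons, Multiset.sum_cons, hsum]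
    have : v z + (v w + v c) + ∑ i ∈ T, u i + (v c + (C.map v).sum) =
      v z + v w + (v c + v c) + (∑ i ∈ T, u i + (C.map v).sum) := by abel
    rw [this, ← hS, h2]
    have : v z + v w + 0 + (v x + v z) = v x + v w + (v z + v z) := by abel
    rw [this, h2, add_zero]

theorem card_le_of_disjoint_meet {α : Type*} [DecidableEq α] (E : Finset (Finset α))
    (D : Finset α) (hd : ∀ e ∈ E, ∀ e' ∈ E, e ≠ e' → Disjoint e e')
    (hm : ∀ e ∈ E, ∃ w ∈ e, w ∈ D) : E.card ≤ D.card := by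
  rcases E.eq_empty_or_nonempty with rfl | ⟨e₀, he₀⟩
  · simp
  have : Nonempty α := ⟨(hm e₀ he₀).choose⟩
  choose! f hf hfD using hm
  apply Finset.card_le_card_of_injOn f (fun e he => hfD e he)
  intro e he e' he' h
  by_contra hne
  exact Finset.disjoint_left.1 (hd e he e' he' hne) (hf e he) (h ▸ hf e' he')

/-- The edges of `E` inside `P` that cross `X`. -/
def crossing {α : Type*} [DecidableEq α] (E : Finset (Finset α)) (P X : Finset α) :
    Finset (Finset α) :=
  E.filter fun e => e ⊆ P ∧ ¬ e ⊆ X ∧ ¬ Disjoint e X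

theorem log_gain {x N y : ℝ} (hx : 0 < x) (hN0 : 0 ≤ N) (hN : N ≤ x) (hy : x + N ≤ y) :
    N / (2 * x) ≤ Real.log y - Real.log x := by
  have l1 : Real.log (x + N) ≤ Real.log y := Real.log_le_log (by positivity) hy
  have l2 := Real.one_sub_inv_le_log_of_pos (x := (x + N) / x) (by positivity)
  rw [Real.log_div (by positivity) (by positivity)] at l2
  have l3 : N / (2 * x) ≤ 1 - ((x + N) / x)⁻¹ := by
    have : 1 - ((x + N) / x)⁻¹ = N / (x + N) := by
      field_simp; ring
    rw [this]
    exact div_le_div_of_nonneg_left hN0 (by positivity) (by linarith)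
  linarith

theorem log_loss {x N y : ℝ} (hx : 0 < x) (hy : 0 < y) (hN0 : 0 ≤ N) (h : y + N ≤ x) :
    N / (2 * x) ≤ Real.log x - Real.log y := by
  have l2 := Real.log_le_sub_one_of_pos (x := y / x) (by positivity)
  rw [Real.log_div (by positivity) (by positivity)] at l2
  have l3 : N / (2 * x) ≤ 1 - y / x := by
    have : 1 - y / x = (2 * (x - y)) / (2 * x) := by
      field_simp
    rw [this]
    exact div_le_div_of_nonneg_right (by linarith) (by positivity)
  linarith

theorem local_ineq {ι α V : Type*} [Fintype ι] [DecidableEq ι] [DecidableEq α] [AddCommGroup V]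
    (h2 : ∀ y : V, y + y = 0) (u : ι → V) (v : α → V) (H : ι → Finset (Finset α))
    (h3 : ∀ i, ∀ e ∈ H i, e.card = 3)
    (hd : ∀ i, ∀ e ∈ H i, ∀ e' ∈ H i, e ≠ e' → Disjoint e e')
    (hu : ∀ i, ∀ e ∈ H i, u i = ∑ a ∈ e, v a)
    (P : Finset α) (A : ℝ)
    (hexp : ∀ X ⊆ P, X.Nonempty → (A * (Real.log P.card - Real.log X.card) - 2) * X.card ≤
      ∑ i, ((crossing (H i) P X).card : ℝ))
    (x : α) (hx : x ∈ P) (Q : Finset ι) :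
    A / 2 * (Real.log P.card - Real.log (reach u v P x Q).card) - 1 ≤
     ∑ i ∈ Qᶜ, ((Real.log P.card - Real.log (reach u v P x Q).card) -
        (Real.log P.card - Real.log (reach u v P x (insert i Q)).card)) +
      ∑ i ∈ Q, ((Real.log P.card - Real.log (reach u v P x (Q.erase i)).card) -
        (Real.log P.card - Real.log (reach u v P x Q).card)) := by
  classical
  set X := reach u v P x Q with hX
  have hXP : X ⊆ P := Finset.filter_subset _ _
  have hxX : x ∈ X := self_mem_reach h2 u v P x hx Q
  have hXpos : (0:ℝ) < X.card := by exact_mod_cast Finset.card_pos.2 ⟨x, hxX⟩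
  have hmeet : ∀ i, ∀ e ∈ crossing (H i) P X, e ∈ H i ∧ e ⊆ P ∧ (∃ w ∈ e, w ∉ X) ∧ 
      (∃ z ∈ e, z ∈ X) := by
    intro i e he
    simp only [crossing, Finset.mem_filter, Finset.not_subset, Finset.not_disjoint_iff] at he
    exact ⟨he.1, he.2.1, he.2.2.1, he.2.2.2⟩
  have hdc : ∀ i, ∀ e ∈ crossing (H i) P X, ∀ e' ∈ crossing (H i) P X, e ≠ e' → Disjoint e e' :=
    fun i e he e' he' => hd i e (hmeet i e he).1 e' (hmeet i e' he').1
  have g1 : ∀ i ∈ Qᶜ, ((crossing (H i) P X).card : ℝ) / (2 * X.card) ≤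
      ((Real.log P.card - Real.log X.card) -
        (Real.log P.card - Real.log (reach u v P x (insert i Q)).card)) := by
    intro i hi
    have hi : i ∉ Q := by simpa using hi
    set N := (crossing (H i) P X).card
    have hN1 : N ≤ X.card := card_le_of_disjoint_meet _ _ (hdc i) (fun e he => (hmeet i e he).2.2.2)
    have hsub : X ⊆ reach u v P x (insert i Q) := reach_mono u v P x (Finset.subset_insert _ _)
    have hN2 : N ≤ (reach u v P x (insert i Q) \ X).card := by
      apply card_le_of_disjoint_meet _ _ (hdc i)
      intro e he
      obtain ⟨heH, heP, ⟨w, hw, hwX⟩, ⟨z, hz, hzX⟩⟩ := hmeet i e he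
      exact ⟨w, hw, Finset.mem_sdiff.2 ⟨reach_step h2 u v P x Q i hi e (h3 i e heH) (hu i e heH)
        z w hz hw (heP hw) hzX, hwX⟩⟩
    have hN3 : X.card + N ≤ (reach u v P x (insert i Q)).card := by
      have := Finset.card_sdiff_add_card_eq_card hsub
      omega
    have hN1' : (N:ℝ) ≤ X.card := by exact_mod_cast hN1
    have hN3' : (X.card + N : ℝ) ≤ (reach u v P x (insert i Q)).card := by exact_mod_cast hN3
    have hN0 : (0:ℝ) ≤ N := Nat.cast_nonneg _
    have := log_gain hXpos hN0 hN1' hN3'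
    linarith
  have g2 : ∀ i ∈ Q, ((crossing (H i) P X).card : ℝ) / (2 * X.card) ≤
      ((Real.log P.card - Real.log (reach u v P x (Q.erase i)).card) -
        (Real.log P.card - Real.log X.card)) := by
    intro i hi
    set N := (crossing (H i) P X).card
    set X' := reach u v P x (Q.erase i) with hX'
    have hsub : X' ⊆ X := reach_mono u v P x (Finset.erase_subset _ _)
    have hN2 : N ≤ (X \ X').card := by
      apply card_le_of_disjoint_meet _ _ (hdc i)
      intro e he
      obtain ⟨heH, heP, ⟨w, hw, hwX⟩, ⟨z, hz, hzX⟩⟩ := hmeet i e he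
      refine ⟨z, hz, Finset.mem_sdiff.2 ⟨hzX, fun hzX' => hwX ?_⟩⟩
      have := reach_step h2 u v P x (Q.erase i) i (Finset.notMem_erase i Q) e (h3 i e heH) (hu i e heH)
        z w hz hw (heP hw) hzX'
      rwa [Finset.insert_erase hi] at this
    have hN3 : X'.card + N ≤ X.card := by
      have := Finset.card_sdiff_add_card_eq_card hsub
      omega
    have hX'pos : (0:ℝ) < X'.card := by 
      exact_mod_cast Finset.card_pos.2 ⟨x, self_mem_reach h2 u v P x hx _⟩
    have hN3' : (X'.card + N : ℝ) ≤ X.card := by exact_mod_cast hN3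
    have hN0 : (0:ℝ) ≤ N := Nat.cast_nonneg _
    have := log_loss hXpos hX'pos hN0 hN3'
    linarith
  have hs := add_le_add (Finset.sum_le_sum g1) (Finset.sum_le_sum g2)
  refine le_trans ?_ hs
  rw [add_comm, Finset.sum_add_sum_compl, ← Finset.sum_div, le_div_iff₀ (by positivity)]
  refine le_trans (le_of_eq ?_) (hexp X hXP ⟨x, hxX⟩)
  ring

/-- Existence of an expanding sub-hypergraph. -/
theorem exists_expander {ι α : Type*} [DecidableEq ι] [DecidableEq α] [Fintype α] [Nonempty α]
    (S : Finset ι) (H : ι → Finset (Finset α)) (A B : ℝ) (hA : 0 ≤ A)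
    (hE : Fintype.card α * (A * Real.log (Fintype.card α) + B) ≤ ∑ i ∈ S, ((H i).card : ℝ)) :
    ∃ P : Finset α, P.Nonempty ∧
      (P.card * B ≤ ∑ i ∈ S, (((H i).filter (· ⊆ P)).card : ℝ)) ∧
      ∀ X ⊆ P, X.Nonempty → A * (Real.log P.card - Real.log X.card) * X.card ≤
        ∑ i ∈ S, ((crossing (H i) P X).card : ℝ) := by
  classical
  let G : ℕ → ℝ := fun m => m * (A * Real.log m + B)
  let E : Finset α → ℝ := fun P => ∑ i ∈ S, (((H i).filter (· ⊆ P)).card : ℝ)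
  let PP : Finset (Finset α) := Finset.univ.filter fun P => P.Nonempty ∧ G P.card ≤ E P
  have hne : PP.Nonempty := by
    refine ⟨Finset.univ, ?_⟩
    simp only [PP, Finset.mem_filter, Finset.mem_univ, true_and]
    refine ⟨Finset.univ_nonempty, ?_⟩
    simpa [G, E] using hE
  obtain ⟨P, hP, hmin⟩ := Finset.exists_min_image PP Finset.card hne
  simp only [PP, Finset.mem_filter, Finset.mem_univ, true_and] at hP hmin
  obtain ⟨hPne, hPE⟩ := hP
  refine ⟨P, hPne, ?_, ?_⟩
  · refine le_trans ?_ hPE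
    have : 0 ≤ Real.log P.card := Real.log_natCast_nonneg _
    simp only [G]
    have h0 : (0:ℝ) ≤ P.card := Nat.cast_nonneg _
    nlinarith [mul_nonneg h0 (mul_nonneg hA this)]
  · intro X hXP hX
    by_cases hXeq : X = P
    · subst hXeq
      simp only [sub_self, mul_zero, zero_mul]
      exact Finset.sum_nonneg fun _ _ => Nat.cast_nonneg _
    have hXlt : X.card < P.card := Finset.card_lt_card (hXP.ssubset_of_ne hXeq)
    have hcard : (P \ X).card + X.card = P.card := Finset.card_sdiff_add_card_eq_card hXP
    have hXpos : 0 < X.card := Finset.card_pos.2 hX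
    have hYne : (P \ X).Nonempty := Finset.card_pos.1 (by omega)
    have hEX : E X < G X.card := by
      by_contra h
      have := hmin X ⟨hX, not_lt.1 h⟩
      omega
    have hEY : E (P \ X) < G (P \ X).card := by
      by_contra h
      have := hmin (P \ X) ⟨hYne, not_lt.1 h⟩
      omega
    have hsplit : E P ≤ E X + E (P \ X) + ∑ i ∈ S, ((crossing (H i) P X).card : ℝ) := by
      simp only [E]
      rw [← Finset.sum_add_distrib, ← Finset.sum_add_distrib]
      apply Finset.sum_le_sum
      intro i _
      have : (H i).filter (· ⊆ P) ⊆ ((H i).filter (· ⊆ X) ∪ (H i).filter (· ⊆ P \ X)) ∪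
          crossing (H i) P X := by
        intro e he
        simp only [Finset.mem_filter, Finset.mem_union, crossing, Finset.subset_sdiff] at he ⊢
        tauto
      have h1 := Finset.card_le_card this
      have h2 := Finset.card_union_le ((H i).filter (· ⊆ X) ∪ (H i).filter (· ⊆ P \ X))
          (crossing (H i) P X)
      have h3 := Finset.card_union_le ((H i).filter (· ⊆ X)) ((H i).filter (· ⊆ P \ X))
      exact_mod_cast (by omega)
    have hYpos : (0:ℝ) < (P \ X).card := by exact_mod_cast Finset.card_pos.2 hYne
    have hXpos' : (0:ℝ) < X.card := by exact_mod_cast hXpos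
    have hc' : ((P \ X).card : ℝ) + X.card = P.card := by exact_mod_cast hcard
    have hlog : Real.log (P \ X).card ≤ Real.log P.card :=
      Real.log_le_log hYpos (by linarith)
    simp only [G] at hEX hEY hPE
    have : (0:ℝ) ≤ A * (P \ X).card * (Real.log P.card - Real.log (P \ X).card) :=
      mul_nonneg (by positivity) (by linarith)
    have h5 : (P.card : ℝ) * (A * Real.log P.card + B) =
      ((P \ X).card + X.card : ℝ) * (A * Real.log P.card + B) := by rw [hc']
    nlinarith

theorem reduce_sum {n : ℕ} {V : Type*} [AddCommGroup V]
    (h2 : ∀ y : V, y + y = 0) (v : Fin n → V) (H : Fin n → Finset (Finset (Fin n)))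
    (h3 : ∀ i, ∀ e ∈ H i, e.card = 3)
    (hd : ∀ i, ∀ e ∈ H i, ∀ e' ∈ H i, e ≠ e' → Disjoint e e')
    (hu : ∀ i, ∀ e ∈ H i, v i = ∑ a ∈ e, v a)
    (δ : ℝ) (hδ : 0 < δ) (hn : 3 ≤ n) (hH : ∀ i, δ * n ≤ ((H i).card : ℝ))
    (S : Finset (Fin n)) (hS : 2 ≤ δ * S.card) (r : ℕ) (hr1 : 1 ≤ r) (hr : 12 * r + 2 ≤ S.card)
    (hnum : 6 * (4 * Real.log n / (δ * S.card) +
      Real.log n / (1 + δ / (4 * Real.log n)) ^ r) < Real.log 2) :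
    ∃ C : Multiset (Fin n), C.card < S.card ∧ ∑ i ∈ S, v i = (C.map v).sum := by
  classical
  have : Nonempty (Fin n) := ⟨⟨0, by omega⟩⟩
  have hnR : (3:ℝ) ≤ n := by exact_mod_cast hn
  have hlog : 0 < Real.log n := Real.log_pos (by linarith)
  have htpos : (0:ℝ) < S.card := by
    have : 0 < S.card := by omega
    exact_mod_cast this
  set A : ℝ := δ * S.card / (2 * Real.log n) with hA
  have hApos : 0 < A := by positivity
  obtain ⟨P, hPne, hPB, hexp⟩ := exists_expander S H A (δ * S.card / 2) hApos.le (by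
    have e : (Fintype.card (Fin n) : ℝ) * (A * Real.log (Fintype.card (Fin n)) + δ * S.card / 2) =
        ∑ i ∈ S, δ * n := by
      rw [Fintype.card_fin, hA, Finset.sum_const, nsmul_eq_mul]
      field_simp
      ring
    rw [e]
    exact Finset.sum_le_sum fun i _ => hH i)
  have hPpos : 0 < P.card := Finset.card_pos.2 hPne
  have hPposR : (0:ℝ) < P.card := by exact_mod_cast hPpos
  have hcol : ∀ i, 3 * ((H i).filter (· ⊆ P)).card ≤ P.card := by
    intro i
    have : (((H i).filter (· ⊆ P)).biUnion id).card = ∑ e ∈ (H i).filter (· ⊆ P), e.card := by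
      apply Finset.card_biUnion
      intro e he e' he' hne
      exact hd i e (Finset.mem_filter.1 he).1 e' (Finset.mem_filter.1 he').1 hne
    rw [Finset.sum_congr rfl (fun e he => h3 i e (Finset.mem_filter.1 he).1), Finset.sum_const,
      smul_eq_mul, mul_comm] at this
    rw [← this]
    apply Finset.card_le_card
    intro x hx
    simp only [Finset.mem_biUnion, Finset.mem_filter, id] at hx
    obtain ⟨e, ⟨_, he⟩, hx⟩ := hx
    exact he hx
  have hPE : (P.card : ℝ) ≤ ∑ i ∈ S, (((H i).filter (· ⊆ P)).card : ℝ) := by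
    refine le_trans ?_ hPB
    nlinarith
  have hPE' : P.card ≤ ∑ i ∈ S, ((H i).filter (· ⊆ P)).card := by exact_mod_cast hPE
  obtain ⟨i₁, hi₁, hne₁⟩ : ∃ i ∈ S, ((H i).filter (· ⊆ P)).card ≠ 0 := by
    apply Finset.exists_ne_zero_of_sum_ne_zero
    omega
  obtain ⟨i₂, hi₂, hne₂⟩ : ∃ i ∈ S.erase i₁, ((H i).filter (· ⊆ P)).card ≠ 0 := by
    apply Finset.exists_ne_zero_of_sum_ne_zero
    have := Finset.add_sum_erase S (fun i => ((H i).filter (· ⊆ P)).card) hi₁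
    have := hcol i₁
    omega
  obtain ⟨e₁, he₁⟩ := Finset.card_pos.1 (Nat.pos_of_ne_zero hne₁)
  obtain ⟨e₂, he₂⟩ := Finset.card_pos.1 (Nat.pos_of_ne_zero hne₂)
  rw [Finset.mem_filter] at he₁ he₂
  obtain ⟨a₁, b₁, c₁, hab₁, hac₁, hbc₁, rfl⟩ := Finset.card_eq_three.1 (h3 _ _ he₁.1)
  obtain ⟨a₂, b₂, c₂, hab₂, hac₂, hbc₂, rfl⟩ := Finset.card_eq_three.1 (h3 _ _ he₂.1)
  have hv₁ : v i₁ = v a₁ + (v b₁ + v c₁) := by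
    rw [hu _ _ he₁.1, Finset.sum_insert (by simp [hab₁, hac₁]), Finset.sum_insert (by simp [hbc₁]),
      Finset.sum_singleton]
  have hv₂ : v i₂ = v a₂ + (v b₂ + v c₂) := by
    rw [hu _ _ he₂.1, Finset.sum_insert (by simp [hab₂, hac₂]), Finset.sum_insert (by simp [hbc₂]),
      Finset.sum_singleton]
  let R : Finset (Fin n) := (S.erase i₁).erase i₂
  have hRcard : R.card + 2 = S.card := by
    have h1 := Finset.card_erase_of_mem hi₂
    have h2 := Finset.card_erase_of_mem hi₁
    simp only [R]; omega
  let ι := {i // i ∈ R}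
  have hιcard : Fintype.card ι = R.card := Fintype.card_coe R
  have : Nonempty ι := by
    rw [← Fintype.card_pos_iff, hιcard]; omega
  let u : ι → V := fun i => v i.1
  have hsplit : ∀ f : Fin n → ℝ, ∑ i ∈ S, f i = f i₁ + (f i₂ + ∑ i : ι, f i.1) := by
    intro f
    rw [← Finset.add_sum_erase S f hi₁, ← Finset.add_sum_erase _ f hi₂, ← Finset.sum_coe_sort R f]
  have hsplitV : ∑ i ∈ S, v i = v i₁ + (v i₂ + ∑ i : ι, u i) := by
    rw [← Finset.add_sum_erase S v hi₁, ← Finset.add_sum_erase _ v hi₂, ← Finset.sum_coe_sort R v]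
  have hcr : ∀ i X, ((crossing (H i) P X).card : ℝ) ≤ X.card := by
    intro i X
    have : (crossing (H i) P X).card ≤ X.card := by
      apply card_le_of_disjoint_meet
      · intro e he e' he'
        exact hd i e (Finset.mem_filter.1 he).1 e' (Finset.mem_filter.1 he').1
      · intro e he
        exact Finset.not_disjoint_iff.1 (Finset.mem_filter.1 he).2.2.2
    exact_mod_cast this
  have hexp' : ∀ X ⊆ P, X.Nonempty → (A * (Real.log P.card - Real.log X.card) - 2) * X.card ≤
      ∑ i : ι, ((crossing (H i.1) P X).card : ℝ) := by
    intro X hX hXn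
    have h1 := hexp X hX hXn
    rw [hsplit (fun i => ((crossing (H i) P X).card : ℝ))] at h1
    have h2 := hcr i₁ X
    have h3 := hcr i₂ X
    linarith
  let x : Fin 6 → Fin n := ![a₁, a₂, b₁, b₂, c₁, c₂]
  have hxP : ∀ j, x j ∈ P := by
    have h1 := he₁.2
    have h2 := he₂.2
    simp only [Finset.insert_subset_iff, Finset.singleton_subset_iff] at h1 h2
    intro j
    fin_cases j <;> simp [x, h1, h2]
  let F : Fin 6 → Finset ι → ℝ := fun j Q =>
    Real.log P.card - Real.log (reach u v P (x j) Q).card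
  have hrpos : ∀ j Q, (0:ℝ) < (reach u v P (x j) Q).card := by
    intro j Q
    exact_mod_cast Finset.card_pos.2 ⟨x j, self_mem_reach h2 u v P (x j) (hxP j) Q⟩
  have hFanti : ∀ j Q Q', Q ⊆ Q' → F j Q' ≤ F j Q := by
    intro j Q Q' h
    have : Real.log (reach u v P (x j) Q).card ≤ Real.log (reach u v P (x j) Q').card :=
      Real.log_le_log (hrpos j Q) (by exact_mod_cast Finset.card_le_card (reach_mono u v P (x j) h))
    simp only [F]; linarith
  have hloc : ∀ j Q, A / 2 * F j Q - 1 ≤ ∑ i ∈ Qᶜ, (F j Q - F j (insert i Q)) +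
      ∑ i ∈ Q, (F j (Q.erase i) - F j Q) := by
    intro j Q
    exact local_ineq h2 u v (fun i : ι => H i.1) (fun i => h3 i.1) (fun i => hd i.1)
      (fun i => hu i.1) P A hexp' (x j) (hxP j) Q
  have hM : ∀ j, F j ∅ ≤ Real.log n := by
    intro j
    have h1 : 0 ≤ Real.log (reach u v P (x j) ∅).card := Real.log_natCast_nonneg _
    have h2 : Real.log P.card ≤ Real.log n := by
      apply Real.log_le_log hPposR
      have : P.card ≤ n := by simpa using Finset.card_le_univ P
      exact_mod_cast this
    simp only [F]; linarith
  obtain ⟨Q, hQd, hQs⟩ := exists_disjoint_blocks F hFanti (A / 2) 1 (Real.log n) (by positivity)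
    hloc hM zero_le_one r (by rw [hιcard]; omega)
  have hFnn : ∀ j, 0 ≤ F j (Q j) := by
    intro j
    have : Real.log (reach u v P (x j) (Q j)).card ≤ Real.log P.card :=
      Real.log_le_log (hrpos j _) (by exact_mod_cast Finset.card_le_card (Finset.filter_subset _ _))
    simp only [F]; linarith
  have hlt : ∑ j, F j (Q j) < Real.log 2 := by
    refine lt_of_le_of_lt hQs (lt_of_le_of_lt ?_ hnum)
    have q1 : 1 / (A / 2) = 4 * Real.log n / (δ * S.card) := by
      rw [hA]; field_simp; ring
    rw [q1]
    have hRpos : (0:ℝ) < R.card := by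
      have : 0 < R.card := by omega
      exact_mod_cast this
    have q2 : δ / (4 * Real.log n) ≤ A / 2 / Fintype.card ι := by
      rw [hιcard, hA, le_div_iff₀ hRpos]
      have : (R.card : ℝ) ≤ S.card := by exact_mod_cast (by omega : R.card ≤ S.card)
      calc δ / (4 * Real.log n) * R.card ≤ δ / (4 * Real.log n) * S.card := by gcongr
        _ = _ := by field_simp; ring
    gcongr
  have hhalf : ∀ j, P.card < 2 * (reach u v P (x j) (Q j)).card := by
    intro j
    have h1 : F j (Q j) < Real.log 2 :=
      lt_of_le_of_lt (Finset.single_le_sum (f := fun j => F j (Q j)) (fun j _ => hFnn j) (Finset.mem_univ j)) hlt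
    simp only [F] at h1
    have h4 : Real.log P.card < Real.log (2 * (reach u v P (x j) (Q j)).card) := by
      rw [Real.log_mul two_ne_zero (hrpos j _).ne']; linarith
    have h5 := (Real.log_lt_log_iff hPposR (by have := hrpos j (Q j); positivity)).1 h4
    exact_mod_cast h5
  have hmeet : ∀ j j', ∃ z, z ∈ reach u v P (x j) (Q j) ∧ z ∈ reach u v P (x j') (Q j') := by
    intro j j'
    by_contra hcon
    push Not at hcon
    have hdis : Disjoint (reach u v P (x j) (Q j)) (reach u v P (x j') (Q j')) :=
      Finset.disjoint_left.2 hcon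
    have h1 := Finset.card_union_of_disjoint hdis
    have h4 : (reach u v P (x j) (Q j) ∪ reach u v P (x j') (Q j')).card ≤ P.card :=
      Finset.card_le_card (Finset.union_subset (Finset.filter_subset _ _) (Finset.filter_subset _ _))
    have h5 := hhalf j
    have h6 := hhalf j'
    omega
  obtain ⟨za, hza, hza'⟩ := hmeet 0 1
  obtain ⟨zb, hzb, hzb'⟩ := hmeet 2 3
  obtain ⟨zc, hzc, hzc'⟩ := hmeet 4 5
  let z : Fin 6 → Fin n := ![za, za, zb, zb, zc, zc]
  have hz : ∀ j, z j ∈ reach u v P (x j) (Q j) := by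
    intro j
    fin_cases j
    exacts [hza, hza', hzb, hzb', hzc, hzc']
  simp only [reach, Finset.mem_filter] at hz
  choose hzP T hTQ C hC hsum using hz
  let TT : Finset ι := Finset.univ.biUnion T
  have hTd : ∀ j ∈ (Finset.univ : Finset (Fin 6)), ∀ j' ∈ (Finset.univ : Finset (Fin 6)),
      j ≠ j' → Disjoint (T j) (T j') := fun j _ j' _ h =>
    Finset.disjoint_of_subset_left (hTQ j) (Finset.disjoint_of_subset_right (hTQ j') (hQd j j' h))
  have hTcard : TT.card = ∑ j, (T j).card := Finset.card_biUnion hTd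
  have hTsum : ∑ i ∈ TT, u i = ∑ j, ∑ i ∈ T j, u i := Finset.sum_biUnion hTd
  have hCcard : (∑ j, C j).card ≤ TT.card := by
    rw [hTcard, Multiset.card_sum]
    exact Finset.sum_le_sum fun j _ => hC j
  have hCsum : ((∑ j, C j).map v).sum = ∑ j, ((C j).map v).sum := by
    rw [← Multiset.coe_mapAddMonoidHom, map_sum, Multiset.sum_sum]
  have hmain : v i₁ + v i₂ = ∑ i ∈ TT, u i + ((∑ j, C j).map v).sum := by
    rw [hTsum, hCsum, ← Finset.sum_add_distrib, ← Finset.sum_congr rfl (fun j _ => hsum j),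
      Fin.sum_univ_six]
    have e : (v (x 0) + v (z 0) + (v (x 1) + v (z 1)) + (v (x 2) + v (z 2)) + (v (x 3) + v (z 3)) +
        (v (x 4) + v (z 4)) + (v (x 5) + v (z 5))) = (v a₁ + (v b₁ + v c₁)) + (v a₂ + (v b₂ + v c₂)) +
        ((v za + v za) + (v zb + v zb) + (v zc + v zc)) := by
      change (v a₁ + v za + (v a₂ + v za) + (v b₁ + v zb) + (v b₂ + v zb) +
        (v c₁ + v zc) + (v c₂ + v zc)) = _
      abel
    rw [e, h2 (v za), h2 (v zb), h2 (v zc), hv₁, hv₂]; simp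
  refine ⟨(∑ j, C j) + (TTᶜ.val.map Subtype.val), ?_, ?_⟩
  · have h1 : TT.card + TTᶜ.card = R.card := by rw [Finset.card_add_card_compl, hιcard]
    rw [Multiset.card_add, Multiset.card_map, Finset.card_val]
    omega
  · rw [Multiset.map_add, Multiset.sum_add, Multiset.map_map, hsplitV, ← add_assoc, hmain,
      ← Finset.sum_add_sum_compl TT u]
    have e : (Multiset.map (v ∘ Subtype.val) TTᶜ.val).sum = ∑ i ∈ TTᶜ, u i := rfl
    rw [e]
    have : ∑ i ∈ TT, u i + ((∑ j, C j).map v).sum + (∑ i ∈ TT, u i + ∑ i ∈ TTᶜ, u i) =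
      (∑ i ∈ TT, u i + ∑ i ∈ TT, u i) + (((∑ j, C j).map v).sum + ∑ i ∈ TTᶜ, u i) := by abel
    rw [this, h2, zero_add]

theorem exists_small_multiset {α V : Type*} [AddCommGroup V] [DecidableEq α]
    (h2 : ∀ y : V, y + y = 0) (v : α → V) (t₀ : ℕ)
    (hred : ∀ S : Finset α, t₀ ≤ S.card →
      ∃ C : Multiset α, C.card < S.card ∧ ∑ i ∈ S, v i = (C.map v).sum) (m : ℕ) :
    ∀ C : Multiset α, C.card = m → ∃ C' : Multiset α, C'.card < t₀ ∧
      (C'.map v).sum = (C.map v).sum := by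
  induction m using Nat.strong_induction_on with
  | _ m ih =>
    intro C hC
    by_cases hlt : C.card < t₀
    · exact ⟨C, hlt, rfl⟩
    by_cases hnd : C.Nodup
    · obtain ⟨C₁, h1, h3⟩ := hred ⟨C, hnd⟩ (not_lt.1 hlt)
      obtain ⟨C₂, h4, h5⟩ := ih C₁.card (by rw [← hC]; exact h1) C₁ rfl
      exact ⟨C₂, h4, by rw [h5, ← h3]; rfl⟩
    · rw [Multiset.nodup_iff_le] at hnd
      push Not at hnd
      obtain ⟨a, ha⟩ := hnd
      obtain ⟨C₁, rfl⟩ := Multiset.le_iff_exists_add.1 ha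
      obtain ⟨C₂, h4, h5⟩ := ih C₁.card (by rw [← hC]; simp) C₁ rfl
      refine ⟨C₂, h4, ?_⟩
      rw [h5]
      simp [← add_assoc, h2]

theorem exists_option_fun {α V : Type*} [AddCommGroup V] (v : α → V) (m : ℕ) :
    ∀ C : Multiset α, C.card ≤ m → ∃ g : Fin m → Option α,
      ∑ j, (g j).elim 0 v = (C.map v).sum := by
  induction m with
  | zero =>
    intro C hC
    have : C = 0 := by simpa using hC
    subst this
    exact ⟨fun _ => none, by simp⟩
  | succ m ih =>
    intro C hC
    induction C using Multiset.induction with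
    | empty => exact ⟨fun _ => none, by simp⟩
    | cons a C _ =>
      obtain ⟨g, hg⟩ := ih C (by simpa using hC)
      exact ⟨Fin.cons (some a) g, by simp [Fin.sum_univ_succ, hg]⟩

theorem exists_multiset_of_span {n k : ℕ} (v : Fin n → Fin k → ZMod 2)
    (hs : Submodule.span (ZMod 2) (Set.range v) = ⊤) (w : Fin k → ZMod 2) :
    ∃ C : Multiset (Fin n), (C.map v).sum = w := by
  have hw : w ∈ Submodule.span (ZMod 2) (Set.range v) := by rw [hs]; trivial
  induction hw using Submodule.span_induction with
  | mem x h =>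
    obtain ⟨i, rfl⟩ := h
    exact ⟨{i}, by simp⟩
  | zero => exact ⟨0, by simp⟩
  | add x y _ _ hx hy =>
    obtain ⟨C, rfl⟩ := hx
    obtain ⟨D, rfl⟩ := hy
    exact ⟨C + D, by simp⟩
  | smul c x _ hx =>
    obtain ⟨C, rfl⟩ := hx
    have hc : c = 0 ∨ c = 1 := by revert c; decide
    rcases hc with rfl | rfl
    · exact ⟨0, by simp⟩
    · exact ⟨C, by simp⟩

theorem dim_le {n k : ℕ} (v : Fin n → Fin k → ZMod 2)
    (hs : Submodule.span (ZMod 2) (Set.range v) = ⊤) (t₀ : ℕ)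
    (hred : ∀ S : Finset (Fin n), t₀ ≤ S.card →
      ∃ C : Multiset (Fin n), C.card < S.card ∧ ∑ i ∈ S, v i = (C.map v).sum) :
    2 ^ k ≤ (n + 1) ^ t₀ := by
  have h2 : ∀ y : Fin k → ZMod 2, y + y = 0 := fun y => funext fun j => CharTwo.add_self_eq_zero (y j)
  have hsurj : Function.Surjective
      (fun g : Fin t₀ → Option (Fin n) => ∑ j, (g j).elim 0 v) := by
    intro w
    obtain ⟨C, rfl⟩ := exists_multiset_of_span v hs w
    obtain ⟨C', h1, h3⟩ := exists_small_multiset h2 v t₀ hred _ C rfl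
    obtain ⟨g, hg⟩ := exists_option_fun v t₀ C' h1.le
    exact ⟨g, by simpa [h3] using hg⟩
  have := Fintype.card_le_of_surjective _ hsurj
  simpa [ZMod.card] using this

theorem stmt0 :
    ∃ C : ℝ, 0 < C ∧
      ∀ (n k : ℕ) (δ : ℝ), 3 ≤ n → 1 ≤ k → 0 < δ → δ < 1 →
        (∃ (v : Fin n → Fin k → ZMod 2) (H : Fin n → Finset (Finset (Fin n))),
          IsBinaryLCC 3 δ v H) →
        (k : ℝ) ≤ C * δ⁻¹ ^ 2 * (Real.logb 2 n) ^ 2 * Real.logb 2 (Real.logb 2 n) := by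
  refine ⟨2000, by norm_num, ?_⟩
  rintro n k δ hn _ hδ hδ1 ⟨v, H, hspan, h3, hd, hH, hu⟩
  have hnR : (3:ℝ) ≤ n := by exact_mod_cast hn
  set l : ℝ := Real.log n with hl
  have hl1 : 1 ≤ l := by
    rw [hl, Real.le_log_iff_exp_le (by linarith)]
    have := Real.exp_one_lt_d9
    linarith
  have h20 : 1 ≤ Real.log (20 * l) := by
    rw [Real.le_log_iff_exp_le (by linarith)]
    have := Real.exp_one_lt_d9
    linarith
  set W : ℝ := l * Real.log (20 * l) / δ with hW
  have hlW : l / δ ≤ W := by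
    rw [hW]; gcongr; nlinarith
  have hld : 1 ≤ l / δ := by rw [le_div_iff₀ hδ]; linarith
  have hW1 : 1 ≤ W := hld.trans hlW
  set r : ℕ := ⌈8 * W⌉₊ with hr
  have hr8 : 8 * W ≤ r := Nat.le_ceil _
  have hr9 : (r : ℝ) ≤ 9 * W := by
    have := Nat.ceil_lt_add_one (show 0 ≤ 8 * W by linarith)
    linarith
  have hr1 : 1 ≤ r := by
    have : (1:ℝ) ≤ r := by linarith
    exact_mod_cast this
  have h2 : ∀ y : Fin k → ZMod 2, y + y = 0 := fun y => funext fun j => CharTwo.add_self_eq_zero (y j)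
  have hpow : 20 * l ≤ (1 + δ / (4 * l)) ^ r := by
    set ε := δ / (4 * l) with hε
    have hε0 : 0 < ε := by positivity
    have hε1 : ε ≤ 1 := by rw [hε, div_le_one (by positivity)]; linarith
    have h5 : ε / 2 ≤ Real.log (1 + ε) := by
      have h6 := Real.one_sub_inv_le_log_of_pos (x := 1 + ε) (by linarith)
      have h7 : 1 - (1 + ε)⁻¹ = ε / (1 + ε) := by field_simp; ring
      rw [h7] at h6
      refine le_trans ?_ h6
      apply div_le_div_of_nonneg_left hε0.le (by linarith) (by linarith)
    rw [← Real.log_le_log_iff (by positivity) (by positivity), Real.log_pow]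
    calc Real.log (20 * l) = 8 * W * (ε / 2) := by rw [hW, hε]; field_simp; ring
      _ ≤ r * Real.log (1 + ε) := by gcongr
  have hred : ∀ S : Finset (Fin n), 12 * r + 2 ≤ S.card →
      ∃ C : Multiset (Fin n), C.card < S.card ∧ ∑ i ∈ S, v i = (C.map v).sum := by
    intro S hS
    have hSR : (12 * r + 2 : ℝ) ≤ S.card := by exact_mod_cast hS
    have hS96 : 96 * (l / δ) ≤ S.card := by linarith
    have hδS : 96 * l ≤ δ * S.card := by
      have := mul_le_mul_of_nonneg_left hS96 hδ.le
      have e : δ * (96 * (l / δ)) = 96 * l := by field_simp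
      linarith
    refine reduce_sum h2 v H h3 hd hu δ hδ hn hH S (by linarith) r hr1 hS ?_
    have q1 : 4 * l / (δ * S.card) ≤ 1 / 20 := by
      rw [div_le_div_iff₀ (by linarith) (by norm_num)]; linarith
    have q2 : l / (1 + δ / (4 * l)) ^ r ≤ 1 / 20 := by
      rw [div_le_div_iff₀ (by positivity) (by norm_num)]; linarith
    have := Real.log_two_gt_d9
    linarith
  have hdim := dim_le v hspan _ hred
  have hdimR : (2:ℝ) ^ k ≤ ((n:ℝ) ^ 2) ^ (12 * r + 2) := by
    calc (2:ℝ) ^ k ≤ ((n:ℝ) + 1) ^ (12 * r + 2) := by exact_mod_cast hdim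
      _ ≤ _ := by gcongr; nlinarith
  set Λ : ℝ := Real.logb 2 n with hΛ
  have hkΛ : (k:ℝ) ≤ (12 * r + 2) * (2 * Λ) := by
    have := Real.logb_le_logb_of_le (b := 2) (by norm_num) (by positivity) hdimR
    rw [Real.logb_pow, Real.logb_pow, Real.logb_pow, Real.logb_self_eq_one (by norm_num)] at this
    push_cast at this
    linarith
  have hlog2 : 0 < Real.log 2 := Real.log_pos (by norm_num)
  have hlog21 : Real.log 2 ≤ 1 := by have := Real.log_two_lt_d9; linarith
  have hΛ32 : 3 / 2 ≤ Λ := by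
    rw [hΛ, Real.le_logb_iff_rpow_le (by norm_num) (by linarith)]
    refine le_trans ?_ hnR
    have : ((2:ℝ) ^ (3/2:ℝ)) ^ 2 ≤ 3 ^ 2 := by
      rw [← Real.rpow_natCast, ← Real.rpow_mul (by norm_num)]; norm_num
    exact le_of_sq_le_sq this (by norm_num)
  set M : ℝ := Real.logb 2 Λ with hM
  have hM12 : 1 / 2 ≤ M := by
    rw [hM, Real.le_logb_iff_rpow_le (by norm_num) (by linarith)]
    refine le_trans ?_ hΛ32
    have : ((2:ℝ) ^ (1/2:ℝ)) ^ 2 ≤ (3 / 2) ^ 2 := by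
      rw [← Real.rpow_natCast, ← Real.rpow_mul (by norm_num)]; norm_num
    exact le_of_sq_le_sq this (by norm_num)
  have hlΛ : l ≤ Λ := by
    rw [hΛ, Real.logb, le_div_iff₀ hlog2]; nlinarith
  have hlM : Real.log (20 * l) ≤ 9 * M := by
    rw [Real.log_mul (by norm_num) (by linarith)]
    have h5 : Real.log 20 ≤ 4 := by
      rw [Real.log_le_iff_le_exp (by norm_num)]
      have h6 := Real.exp_one_gt_d9
      have : Real.exp 4 = Real.exp 1 ^ 4 := by rw [← Real.exp_nat_mul]; norm_num
      rw [this]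
      calc (20:ℝ) ≤ 2.7 ^ 4 := by norm_num
        _ ≤ _ := by gcongr; linarith
    have h6 : Real.log l ≤ Real.log Λ := Real.log_le_log (by linarith) hlΛ
    have h7 : Real.log Λ ≤ M := by
      have : 0 ≤ Real.log Λ := Real.log_nonneg (by linarith)
      rw [hM, Real.logb, le_div_iff₀ hlog2]; nlinarith
    linarith
  have hWb : W ≤ δ⁻¹ ^ 2 * (Λ * (9 * M)) := by
    rw [hW, div_eq_inv_mul]
    have hd1 : 1 ≤ δ⁻¹ := (one_le_inv₀ hδ).2 hδ1.le
    have : δ⁻¹ ≤ δ⁻¹ ^ 2 := by nlinarith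
    gcongr
  have ht : (12 * r + 2 : ℝ) ≤ 110 * W := by linarith
  calc (k:ℝ) ≤ (12 * r + 2) * (2 * Λ) := hkΛ
    _ ≤ (110 * (δ⁻¹ ^ 2 * (Λ * (9 * M)))) * (2 * Λ) := by
      gcongr
      linarith
    _ = 1980 * (δ⁻¹ ^ 2 * Λ ^ 2 * M) := by ring
    _ ≤ 2000 * (δ⁻¹ ^ 2 * Λ ^ 2 * M) := by
      gcongr; norm_num
    _ = _ := by ring
end

section
/- There exists an absolute constant C > 0 such that the following holds for all integers n ≥ 3, k ≥ 1 and all δ ∈ (0,1): if M ∈ F_2^{n×k} with rows v_1,…,v_n is (together with matchings H_1,…,H_n) a binary linear (3,δ)-LCC of block length n and dimension k, then for every x ∈ F_2^k there exists a subset I ⊆ [n] with |I| ≤ C · δ^{-2} · log₂ n · log₂ log₂ n such that x = Σ_{i∈I} v_i. (Equivalently, the covering radius of the dual code is at most C · δ^{-2} · log₂ n · log₂ log₂ n.) -/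
namespace LCCProof

/-- Sum of `f` over all permuted copies of `B`. -/
noncomputable def permSum {ι : Type*} [Fintype ι] [DecidableEq ι] (f : Finset ι → ℝ)
    (B : Finset ι) : ℝ := ∑ σ : Equiv.Perm ι, f (B.map σ.toEmbedding)

lemma permSum_congr {ι : Type*} [Fintype ι] [DecidableEq ι] (f : Finset ι → ℝ)
    (B B' : Finset ι) (h : B.card = B'.card) : permSum f B = permSum f B' := by
  classical
  have e : {x // x ∈ B} ≃ {x // x ∈ B'} := Finset.equivOfCardEq h
  let π : Equiv.Perm ι := e.extendSubtype
  have hπ : B.map π.toEmbedding = B' := by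
    apply Finset.eq_of_subset_of_card_le
    · intro x hx
      obtain ⟨y, hy, rfl⟩ := Finset.mem_map.1 hx
      exact e.extendSubtype_mem y hy
    · simp [h]
  unfold permSum
  rw [← hπ]
  symm
  apply Fintype.sum_equiv (Equiv.mulRight π)
  intro σ
  congr 1
  rw [Finset.map_map]
  rfl

lemma permSum_ineq {ι : Type*} [Fintype ι] [DecidableEq ι] (f : Finset ι → ℝ) (φ : ℝ)
    (h : ∀ S : Finset ι, φ * f S ≤ ∑ i ∈ S, (f (S.erase i) - f S)
      + ∑ i ∈ Sᶜ, (f S - f (insert i S))) (B : Finset ι) :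
    φ * permSum f B ≤ ∑ i ∈ B, (permSum f (B.erase i) - permSum f B)
      + ∑ i ∈ Bᶜ, (permSum f B - permSum f (insert i B)) := by
  unfold permSum
  simp_rw [← Finset.sum_sub_distrib]
  rw [Finset.sum_comm, Finset.sum_comm (s := Bᶜ), ← Finset.sum_add_distrib, Finset.mul_sum]
  apply Finset.sum_le_sum
  intro σ _
  refine (h (B.map σ.toEmbedding)).trans (le_of_eq ?_)
  congr 1
  · rw [Finset.sum_map]
    apply Finset.sum_congr rfl
    intro i _
    rw [Finset.map_erase]
  · have : (B.map σ.toEmbedding)ᶜ = (Bᶜ).map σ.toEmbedding := by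
      ext x; simp
    rw [this, Finset.sum_map]
    apply Finset.sum_congr rfl
    intro i _
    rw [Finset.map_insert]

lemma permSum_fun {ι : Type*} [Fintype ι] [DecidableEq ι] (f : Finset ι → ℝ) :
    ∃ y : ℕ → ℝ, ∀ B : Finset ι, permSum f B = y B.card := by
  classical
  refine ⟨fun j => if h : ∃ B : Finset ι, B.card = j then permSum f h.choose else 0, ?_⟩
  intro B
  have h : ∃ B' : Finset ι, B'.card = B.card := ⟨B, rfl⟩
  simp only [dif_pos h]
  exact permSum_congr f _ _ h.choose_spec.symm

lemma seq_step (y : ℕ → ℝ) (t : ℕ) (φ : ℝ) (hφ : 0 ≤ φ)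
    (hanti : ∀ j, j < t → y (j+1) ≤ y j) (_hpos : ∀ j, j ≤ t → 0 ≤ y j)
    (h : ∀ j, j + 2 ≤ t → φ * y (j+1) ≤ (j+1 : ℝ) * (y j - y (j+1))
      + ((t:ℝ) - (j+1)) * (y (j+1) - y (j+2)))
    (A s : ℕ) (hAs : A + s + 1 ≤ t) : φ * s * y (A+s) ≤ 2 * t * (y A - y (A+s+1)) := by
  have key : ∀ r, A + r + 1 ≤ t → φ * r * y (A+r) ≤ t * (y A - y (A+r)) + t * (y (A+1) - y (A+r+1)) := by
    intro r
    induction r with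
    | zero => intro _; simp
    | succ r ih =>
      intro hr
      have ih' := ih (by omega)
      have h1 := h (A+r) (by omega)
      have a1 := hanti (A+r) (by omega)
      have a2 := hanti (A+r+1) (by omega)
      have e1 : ((A+r:ℕ):ℝ) + 1 ≤ t := by exact_mod_cast (by omega : A + r + 1 ≤ t)
      have e0 : (0:ℝ) ≤ ((A+r:ℕ):ℝ) := by positivity
      have b1 : φ * r * y (A+r+1) ≤ φ * r * y (A+r) :=
        mul_le_mul_of_nonneg_left a1 (by positivity)
      have c1 : (((A+r:ℕ):ℝ)+1) * (y (A+r) - y (A+r+1)) ≤ t * (y (A+r) - y (A+r+1)) :=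
        mul_le_mul_of_nonneg_right e1 (by linarith)
      have c2 : ((t:ℝ) - (((A+r:ℕ):ℝ)+1)) * (y (A+r+1) - y (A+r+2)) ≤ t * (y (A+r+1) - y (A+r+2)) :=
        mul_le_mul_of_nonneg_right (by linarith) (by linarith)
      have : A + (r+1) = A + r + 1 := by ring
      rw [this]
      push_cast at *
      nlinarith
  have k := key s hAs
  have a1 : y (A+1) ≤ y A := hanti A (by omega)
  have a2 := hanti (A+s) (by omega)
  have ht : (0:ℝ) ≤ t := by positivity
  nlinarith [mul_le_mul_of_nonneg_left a1 ht, mul_le_mul_of_nonneg_left a2 ht]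

lemma seq_decay (y : ℕ → ℝ) (t : ℕ) (φ : ℝ) (hφ : 0 ≤ φ)
    (hanti : ∀ j, j < t → y (j+1) ≤ y j) (hpos : ∀ j, j ≤ t → 0 ≤ y j)
    (h : ∀ j, j + 2 ≤ t → φ * y (j+1) ≤ (j+1 : ℝ) * (y j - y (j+1))
      + ((t:ℝ) - (j+1)) * (y (j+1) - y (j+2)))
    (s : ℕ) (hs : 4 * (t:ℝ) ≤ φ * s) (m : ℕ) (hm : m * s + 1 ≤ t) :
    2 ^ m * y (m * s) ≤ y 0 := by
  induction m with
  | zero => simp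
  | succ m ih =>
    have e : (m+1) * s = m * s + s := by ring
    rw [e] at hm ⊢
    have ih' := ih (by omega)
    have k := seq_step y t φ hφ hanti hpos h (m*s) s hm
    have p1 := hpos (m*s+s+1) (by omega)
    have p2 := hpos (m*s+s) (by omega)
    have ht : (0:ℝ) < t := by exact_mod_cast (by omega : 0 < t)
    have k2 : 4 * (t:ℝ) * y (m*s+s) ≤ 2 * t * y (m*s) := by
      have := mul_le_mul_of_nonneg_right hs p2
      nlinarith [mul_nonneg ht.le p1]
    have k3 : 2 * y (m*s+s) ≤ y (m*s) := by
      have : (2*t) * (2 * y (m*s+s)) ≤ (2 * t) * y (m*s) := by linarith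
      exact le_of_mul_le_mul_left this (by linarith)
    calc (2:ℝ)^(m+1) * y (m*s+s) = 2^m * (2 * y (m*s+s)) := by ring
      _ ≤ 2^m * y (m*s) := by gcongr
      _ ≤ _ := ih'

lemma permSum_decay {ι : Type*} [Fintype ι] [DecidableEq ι] (f : Finset ι → ℝ) (φ L : ℝ)
    (hφ : 0 ≤ φ) (hL : f ∅ ≤ L) (h0 : ∀ S, 0 ≤ f S) (hmono : ∀ S T, S ⊆ T → f T ≤ f S)
    (h : ∀ S : Finset ι, φ * f S ≤ ∑ i ∈ S, (f (S.erase i) - f S)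
      + ∑ i ∈ Sᶜ, (f S - f (insert i S)))
    (s m : ℕ) (hs : 4 * (Fintype.card ι : ℝ) ≤ φ * s) (hm : m * s + 1 ≤ Fintype.card ι)
    (B : Finset ι) (hB : B.card = m * s) :
    2 ^ m * permSum f B ≤ (Fintype.card (Equiv.Perm ι)) * L := by
  obtain ⟨y, hy⟩ := permSum_fun f
  have hex : ∀ j, j ≤ Fintype.card ι → ∃ B : Finset ι, B.card = j := fun j hj => by
    obtain ⟨B, _, hB⟩ := Finset.exists_subset_card_eq (s := (Finset.univ : Finset ι)) (n := j) (by simpa using hj)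
    exact ⟨B, hB⟩
  have hins : ∀ B : Finset ι, ∀ i ∈ Bᶜ, permSum f (insert i B) = y (B.card + 1) := by
    intro B i hi
    rw [hy, Finset.card_insert_of_notMem (by simpa using hi)]
  have key := seq_decay y (Fintype.card ι) φ hφ ?_ ?_ ?_ s hs m hm
  · rw [hy, hB]
    refine key.trans ?_
    have : y 0 = permSum f ∅ := by rw [hy]; simp
    rw [this]
    unfold permSum
    simp only [Finset.map_empty, Finset.sum_const, Finset.card_univ, nsmul_eq_mul]
    gcongr
  · intro j hj
    obtain ⟨B, hB⟩ := hex (j+1) hj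
    have hne : B.Nonempty := Finset.card_pos.1 (by omega)
    obtain ⟨b, hb⟩ := hne
    have e1 : (B.erase b).card = j := by rw [Finset.card_erase_of_mem hb]; omega
    rw [← hB, ← hy, ← e1, ← hy]
    apply Finset.sum_le_sum
    intro σ _
    apply hmono
    exact Finset.map_subset_map.2 (Finset.erase_subset _ _)
  · intro j hj
    obtain ⟨B, hB⟩ := hex j hj
    rw [← hB, ← hy]
    exact Finset.sum_nonneg fun σ _ => h0 _
  · intro j hj
    obtain ⟨B, hB⟩ := hex (j+1) (by omega)
    have k := permSum_ineq f φ h B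
    rw [Finset.sum_congr rfl (g := fun _ => y j - y (j+1)),
      Finset.sum_congr (s₁ := Bᶜ) rfl (g := fun _ => y (j+1) - y (j+2)), hy, hB] at k
    · simp only [Finset.sum_const, nsmul_eq_mul, Finset.card_compl, hB] at k
      rw [Nat.cast_sub (by omega)] at k
      push_cast at k
      exact k
    · intro i hi
      rw [hins B i hi, hy, hB]
    · intro i hi
      rw [hy, hy, Finset.card_erase_of_mem hi, hB]; rfl

lemma permSum_mem {ι : Type*} [Fintype ι] [DecidableEq ι] (i : ι) (B : Finset ι) :
    (Fintype.card ι : ℝ) * permSum (fun S => if i ∈ S then (1:ℝ) else 0) B =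
      B.card * Fintype.card (Equiv.Perm ι) := by
  have hc : ∀ l, permSum (fun S => if i ∈ S then (1:ℝ) else 0) {l} =
      permSum (fun S => if i ∈ S then (1:ℝ) else 0) {i} :=
    fun l => permSum_congr _ _ _ (by simp)
  have hsum : ∀ B : Finset ι, permSum (fun S => if i ∈ S then (1:ℝ) else 0) B =
      ∑ l ∈ B, permSum (fun S => if i ∈ S then (1:ℝ) else 0) {l} := by
    intro B
    unfold permSum
    rw [Finset.sum_comm]
    apply Finset.sum_congr rfl
    intro σ _
    simp only [Finset.map_singleton, Finset.mem_singleton, Finset.mem_map_equiv]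
    have : ∀ l, (i = σ.toEmbedding l) ↔ (σ.symm i = l) := fun l => by
      simp [Equiv.symm_apply_eq]
    simp_rw [this]
    rw [Finset.sum_ite_eq]
  have hu : permSum (fun S => if i ∈ S then (1:ℝ) else 0) Finset.univ = Fintype.card (Equiv.Perm ι) := by
    unfold permSum
    simp
  rw [hsum] at hu
  rw [hsum]
  simp_rw [hc] at hu ⊢
  simp only [Finset.sum_const, nsmul_eq_mul, Finset.card_univ] at hu ⊢
  rw [← hu]; ring

end LCCProof

namespace LCCProof

lemma card_le_of_meets {α : Type*} [DecidableEq α] (F : Finset (Finset α)) (X : Finset α)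
    (hd : ∀ e ∈ F, ∀ e' ∈ F, e ≠ e' → Disjoint e e') (hm : ∀ e ∈ F, ∃ x ∈ e, x ∈ X) :
    F.card ≤ X.card := by
  rcases F.eq_empty_or_nonempty with h0 | ⟨e0, he0⟩
  · simp [h0]
  have : Nonempty α := ⟨(hm e0 he0).choose⟩
  choose! g hg1 hg2 using hm
  apply Finset.card_le_card_of_injOn g (fun e he => hg2 e he)
  intro e he e' he' heq
  by_contra hne
  exact Finset.disjoint_left.1 (hd e he e' he' hne) (hg1 e he) (heq ▸ hg1 e' he')

/-- Number of colored edges inside `U`. -/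
def inside {ι α : Type*} [Fintype ι] [DecidableEq α] (E : ι → Finset (Finset α))
    (U : Finset α) : ℕ := ∑ i, ((E i).filter (fun e => e ⊆ U)).card

/-- Edges of one color inside `V` crossing the boundary of `U`. -/
def cross {α : Type*} [DecidableEq α] (F : Finset (Finset α)) (V U : Finset α) :
    Finset (Finset α) := F.filter (fun e => e ⊆ V ∧ ¬ e ⊆ U ∧ ¬ Disjoint e U)

lemma inside_le {ι α : Type*} [Fintype ι] [DecidableEq α] (E : ι → Finset (Finset α))
    (U V : Finset α) :
    inside E V ≤ inside E U + inside E (V \ U) + ∑ i, (cross (E i) V U).card := by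
  unfold inside
  rw [← Finset.sum_add_distrib, ← Finset.sum_add_distrib]
  apply Finset.sum_le_sum
  intro i _
  refine le_trans (Finset.card_le_card (t := ((E i).filter (fun e => e ⊆ U) ∪
    (E i).filter (fun e => e ⊆ V \ U)) ∪ cross (E i) V U) ?_) ?_
  · intro e he
    simp only [cross, Finset.mem_union, Finset.mem_filter, Finset.subset_sdiff] at he ⊢
    tauto
  · refine (Finset.card_union_le _ _).trans ?_
    gcongr
    exact Finset.card_union_le _ _

lemma inside_small {ι α : Type*} [Fintype ι] [DecidableEq α] (E : ι → Finset (Finset α))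
    (h3 : ∀ i, ∀ e ∈ E i, e.card = 3) (U : Finset α) (hU : U.card ≤ 2) : inside E U = 0 := by
  unfold inside
  apply Finset.sum_eq_zero
  intro i _
  rw [Finset.card_eq_zero, Finset.filter_eq_empty_iff]
  intro e he hs
  have := Finset.card_le_card hs
  have := h3 i e he
  omega

lemma xlogx (p q : ℝ) (hp : 0 < p) (hq : 0 ≤ q) :
    p * Real.logb 2 ((p+q)/p) ≤ (p+q) * Real.logb 2 (p+q) - p * Real.logb 2 p - q * Real.logb 2 q := by
  rw [Real.logb_div (by positivity) (by positivity)]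
  rcases hq.eq_or_lt with h | h
  · subst h; simp
  · have : Real.logb 2 q ≤ Real.logb 2 (p+q) := by
      apply Real.logb_le_logb_of_le (by norm_num) h (by linarith)
    nlinarith

lemma exists_expander {ι α : Type*} [Fintype ι] [Fintype α] [DecidableEq α]
    (E : ι → Finset (Finset α)) (h3 : ∀ i, ∀ e ∈ E i, e.card = 3) (δ : ℝ)
    (hn : 3 ≤ Fintype.card α)
    (hδ : ∀ i, δ * Fintype.card α ≤ (E i).card) :
    ∃ (V : Finset α) (φ : ℝ), 2 ≤ V.card ∧
      δ * Fintype.card ι ≤ φ * Real.logb 2 (Fintype.card α) ∧ 0 ≤ φ ∧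
      (inside E V : ℝ) = φ * (V.card * Real.logb 2 V.card) ∧
      ∀ U ⊆ V, U.Nonempty →
        φ * (U.card * Real.logb 2 (V.card / U.card)) ≤ ∑ i, ((cross (E i) V U).card : ℝ) := by
  classical
  let g : Finset α → ℝ := fun V => (inside E V : ℝ) / (V.card * Real.logb 2 V.card)
  have hne : ((Finset.univ : Finset (Finset α)).filter (fun V => 2 ≤ V.card)).Nonempty :=
    ⟨Finset.univ, by simp; omega⟩
  obtain ⟨V, hV, hmax⟩ := Finset.exists_max_image _ g hne
  simp only [Finset.mem_filter, Finset.mem_univ, true_and] at hV hmax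
  have hden : ∀ U : Finset α, 2 ≤ U.card → 0 < (U.card : ℝ) * Real.logb 2 U.card := by
    intro U hU
    have : (2:ℝ) ≤ U.card := by exact_mod_cast hU
    have h2 : 0 < Real.logb 2 U.card := Real.logb_pos (by norm_num) (by linarith)
    positivity
  have hlog0 : ∀ U : Finset α, 0 ≤ (U.card : ℝ) * Real.logb 2 U.card := by
    intro U
    by_cases hU : 2 ≤ U.card
    · exact (hden U hU).le
    · have : U.card = 0 ∨ U.card = 1 := by omega
      rcases this with h | h <;> simp [h]
  have hg0 : 0 ≤ g V := div_nonneg (by positivity) (hlog0 V)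
  have hUle : ∀ U : Finset α, (inside E U : ℝ) ≤ g V * (U.card * Real.logb 2 U.card) := by
    intro U
    by_cases hU : 2 ≤ U.card
    · have := hmax U hU
      exact (div_le_iff₀ (hden U hU)).1 this
    · rw [inside_small E h3 U (by omega)]
      have := hlog0 U
      push_cast
      positivity
  have hVeq : (inside E V : ℝ) = g V * (V.card * Real.logb 2 V.card) :=
    (div_mul_cancel₀ _ (hden V hV).ne').symm
  refine ⟨V, g V, hV, ?_, hg0, hVeq, ?_⟩
  · have h1 := hUle Finset.univ
    have h2 : (Fintype.card ι : ℝ) * (δ * Fintype.card α) ≤ (inside E Finset.univ : ℝ) := by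
      unfold inside
      push_cast
      have : ∑ i : ι, δ * (Fintype.card α : ℝ) ≤
        ∑ i, (((E i).filter (fun e => e ⊆ Finset.univ)).card : ℝ) := by
        apply Finset.sum_le_sum
        intro i _
        simpa using hδ i
      simpa using this
    rw [Finset.card_univ] at h1
    have hpos : (0:ℝ) < Fintype.card α := by exact_mod_cast (by omega : 0 < Fintype.card α)
    have := h2.trans h1
    refine le_of_mul_le_mul_left (a := (Fintype.card α : ℝ)) ?_ hpos
    linarith
  · intro U hUV hU
    have h1 : (inside E V : ℝ) ≤ inside E U + inside E (V \ U) + ∑ i, ((cross (E i) V U).card : ℝ) := by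
      exact_mod_cast inside_le E U V
    have h2 := hUle U
    have h4 := hUle (V \ U)
    have hc : (V.card : ℝ) = U.card + (V \ U).card := by
      have := Finset.card_sdiff_add_card_eq_card hUV
      exact_mod_cast (by omega : V.card = U.card + (V \ U).card)
    have hup : (0:ℝ) < U.card := by exact_mod_cast hU.card_pos
    have h5 := xlogx U.card (V \ U).card hup (Nat.cast_nonneg _)
    rw [← hc] at h5
    have h6 := mul_le_mul_of_nonneg_left h5 hg0
    rw [hVeq] at h1
    linarith

lemma logb_gain1 (u q g : ℝ) (hu : 0 < u) (hg : 0 ≤ g) (hgu : g ≤ u) (hq : u + g ≤ q) :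
    g / u ≤ Real.logb 2 q - Real.logb 2 u := by
  rw [← Real.logb_div (by linarith) (by linarith)]
  rw [Real.le_logb_iff_rpow_le (by norm_num) (by apply div_pos <;> linarith)]
  have := rpow_one_add_le_one_add_mul_self (s := 1) (by norm_num) (p := g/u) (by positivity)
    (by rw [div_le_one hu]; exact hgu)
  norm_num at this
  refine this.trans ?_
  rw [le_div_iff₀ hu]
  field_simp
  linarith

lemma logb_gain2 (u p g : ℝ) (hp : 0 < p) (hg : 0 ≤ g) (hq : p + g ≤ u) :
    g / u ≤ Real.logb 2 u - Real.logb 2 p := by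
  have hu : 0 < u := by linarith
  rw [← Real.logb_div (by linarith) (by linarith)]
  have h1 := Real.one_sub_inv_le_log_of_pos (x := u/p) (by positivity)
  have h2 : g / u ≤ 1 - (u/p)⁻¹ := by
    rw [inv_div, div_le_iff₀ hu]
    field_simp
    linarith
  have h3 : 0 ≤ g / u := by positivity
  have hl2 : Real.log 2 ≤ 1 := by have := Real.log_two_lt_d9; linarith
  have hl0 : 0 < Real.log 2 := Real.log_pos (by norm_num)
  rw [Real.logb, le_div_iff₀ hl0]
  nlinarith

lemma reach_ineq {ι α : Type*} [Fintype ι] [DecidableEq ι] [DecidableEq α]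
    (E : ι → Finset (Finset α))
    (hdis : ∀ i, ∀ e ∈ E i, ∀ e' ∈ E i, e ≠ e' → Disjoint e e')
    (V : Finset α) (φ : ℝ)
    (hexp : ∀ U ⊆ V, U.Nonempty →
        φ * (U.card * Real.logb 2 (V.card / U.card)) ≤ ∑ i, ((cross (E i) V U).card : ℝ))
    (R : Finset ι → Finset α) (hRV : ∀ S, R S ⊆ V) (hRne : ∀ S, (R S).Nonempty)
    (hmono : ∀ S T, S ⊆ T → R S ⊆ R T)
    (hstep : ∀ S i, i ∉ S → ∀ e ∈ E i, e ⊆ V → ∀ u ∈ e, ∀ w ∈ e, u ∈ R S → w ∈ R (insert i S))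
    (f : Finset ι → ℝ) (hf : ∀ S, f S = Real.logb 2 (V.card / (R S).card)) (S : Finset ι) :
    φ * f S ≤ ∑ i ∈ S, (f (S.erase i) - f S) + ∑ i ∈ Sᶜ, (f S - f (insert i S)) := by
  have hVpos : (V.card : ℝ) ≠ 0 := by
    have := ((hRne ∅).mono (hRV ∅)).card_pos
    positivity
  have hRpos : ∀ S, (0:ℝ) < (R S).card := fun S => by exact_mod_cast (hRne S).card_pos
  have hf' : ∀ S, f S = Real.logb 2 V.card - Real.logb 2 (R S).card := fun S => by
    rw [hf, Real.logb_div hVpos (hRpos S).ne']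
  have hcd : ∀ i, ∀ e ∈ cross (E i) V (R S), ∀ e' ∈ cross (E i) V (R S), e ≠ e' → Disjoint e e' := by
    intro i e he e' he'
    exact hdis i e (Finset.mem_filter.1 he).1 e' (Finset.mem_filter.1 he').1
  have hcx : ∀ i, ∀ e ∈ cross (E i) V (R S), e ∈ E i ∧ e ⊆ V ∧ (∃ u ∈ e, u ∈ R S) ∧ ∃ w ∈ e, w ∉ R S := by
    intro i e he
    obtain ⟨h1, h2, h3, h4⟩ := Finset.mem_filter.1 he
    exact ⟨h1, h2, Finset.not_disjoint_iff.1 h4, Finset.not_subset.1 h3⟩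
  have h1 : ∀ i ∈ S, ((cross (E i) V (R S)).card : ℝ) / (R S).card ≤ f (S.erase i) - f S := by
    intro i hi
    rw [hf', hf']
    have := logb_gain2 (R S).card (R (S.erase i)).card (cross (E i) V (R S)).card (hRpos _)
      (by positivity) ?_
    · linarith
    · have hsub := hmono (S.erase i) S (Finset.erase_subset _ _)
      have h := card_le_of_meets (cross (E i) V (R S)) (R S \ R (S.erase i)) (hcd i) ?_
      · have h2 := Finset.card_sdiff_add_card_eq_card hsub
        exact_mod_cast (by omega : (R (S.erase i)).card + (cross (E i) V (R S)).card ≤ (R S).card)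
      · intro e he
        obtain ⟨he1, he2, ⟨u, hu, huR⟩, w, hw, hwR⟩ := hcx i e he
        refine ⟨u, hu, Finset.mem_sdiff.2 ⟨huR, fun hu' => hwR ?_⟩⟩
        have := hstep (S.erase i) i (by simp) e he1 he2 u hu w hw hu'
        rwa [Finset.insert_erase hi] at this
  have h2 : ∀ i ∈ Sᶜ, ((cross (E i) V (R S)).card : ℝ) / (R S).card ≤ f S - f (insert i S) := by
    intro i hi
    have hi' : i ∉ S := by simpa using hi
    rw [hf', hf']
    have := logb_gain1 (R S).card (R (insert i S)).card (cross (E i) V (R S)).card (hRpos _)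
      (by positivity) ?_ ?_
    · linarith
    · exact_mod_cast card_le_of_meets _ _ (hcd i) fun e he => (hcx i e he).2.2.1
    · have hsub := hmono S (insert i S) (Finset.subset_insert _ _)
      have h := card_le_of_meets (cross (E i) V (R S)) (R (insert i S) \ R S) (hcd i) ?_
      · have h2 := Finset.card_sdiff_add_card_eq_card hsub
        exact_mod_cast (by omega : (R S).card + (cross (E i) V (R S)).card ≤ (R (insert i S)).card)
      · intro e he
        obtain ⟨he1, he2, ⟨u, hu, huR⟩, w, hw, hwR⟩ := hcx i e he
        exact ⟨w, hw, Finset.mem_sdiff.2 ⟨hstep S i hi' e he1 he2 u hu w hw huR, hwR⟩⟩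
  have h3 := hexp (R S) (hRV S) (hRne S)
  rw [← hf] at h3
  have h4 : φ * f S ≤ ∑ i, ((cross (E i) V (R S)).card : ℝ) / (R S).card := by
    rw [← Finset.sum_div, le_div_iff₀ (hRpos S)]
    linarith
  rw [← Finset.sum_add_sum_compl S] at h4
  exact h4.trans (add_le_add (Finset.sum_le_sum h1) (Finset.sum_le_sum h2))

end LCCProof
namespace LCCProof

lemma exists_two_colors {ι α : Type*} [Fintype ι] [DecidableEq ι] [DecidableEq α]
    (E : ι → Finset (Finset α)) (h3 : ∀ i, ∀ e ∈ E i, e.card = 3)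
    (hdis : ∀ i, ∀ e ∈ E i, ∀ e' ∈ E i, e ≠ e' → Disjoint e e')
    (V : Finset α) (hV : V.card < inside E V) :
    ∃ c : Fin 2 → ι, c 0 ≠ c 1 ∧ ∀ r, ∃ e ∈ E (c r), e ⊆ V := by
  by_contra hcon
  push Not at hcon
  have huniq : ∀ i j, (∃ e ∈ E i, e ⊆ V) → (∃ e ∈ E j, e ⊆ V) → i = j := by
    intro i j hi hj
    by_contra hij
    obtain ⟨r, hr⟩ := hcon ![i, j] (by simpa using hij)
    fin_cases r
    · obtain ⟨e, he, hs⟩ := hi; exact hr e he hs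
    · obtain ⟨e, he, hs⟩ := hj; exact hr e he hs
  have hcard : ∀ i, ((E i).filter (fun e => e ⊆ V)).card ≤ V.card := by
    intro i
    apply card_le_of_meets
    · intro e he e' he'
      exact hdis i e (Finset.mem_filter.1 he).1 e' (Finset.mem_filter.1 he').1
    · intro e he
      obtain ⟨h1, h2⟩ := Finset.mem_filter.1 he
      have : 0 < e.card := by rw [h3 i e h1]; norm_num
      obtain ⟨x, hx⟩ := Finset.card_pos.1 this
      exact ⟨x, hx, h2 hx⟩
  by_cases hex : ∃ i, ∃ e ∈ E i, e ⊆ V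
  · obtain ⟨i, hi⟩ := hex
    have : inside E V = ((E i).filter (fun e => e ⊆ V)).card := by
      unfold inside
      apply Finset.sum_eq_single_of_mem i (Finset.mem_univ _)
      intro j _ hj
      rw [Finset.card_eq_zero, Finset.filter_eq_empty_iff]
      intro e he hs
      exact hj (huniq j i ⟨e, he, hs⟩ hi)
    have := hcard i
    omega
  · push Not at hex
    have : inside E V = 0 := by
      unfold inside
      apply Finset.sum_eq_zero
      intro j _
      rw [Finset.card_eq_zero, Finset.filter_eq_empty_iff]
      intro e he hs
      exact hex j e he hs
    omega

set_option maxHeartbeats 2000000 in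
lemma core {ι α : Type*} [Fintype ι] [DecidableEq ι] [Fintype α] [DecidableEq α]
    (E : ι → Finset (Finset α)) (h3 : ∀ i, ∀ e ∈ E i, e.card = 3)
    (hdis : ∀ i, ∀ e ∈ E i, ∀ e' ∈ E i, e ≠ e' → Disjoint e e')
    (δ : ℝ) (hδ0 : 0 < δ) (hn : 3 ≤ Fintype.card α)
    (hδ : ∀ i, δ * Fintype.card α ≤ (E i).card)
    (Rch : α → Finset ι → α → Prop) (hrefl : ∀ a S, Rch a S a)
    (hmono : ∀ a b S T, S ⊆ T → Rch a S b → Rch a T b)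
    (hstep : ∀ a S u w i, i ∉ S → ∀ e ∈ E i, u ∈ e → w ∈ e → Rch a S u → Rch a (insert i S) w)
    (s m : ℕ) (hs : 4 * Real.logb 2 (Fintype.card α) ≤ δ * s)
    (hm0 : 1 ≤ m) (hm : 12 * Real.logb 2 (Fintype.card α) < 2 ^ m)
    (ht : 24 * (m * s) ≤ Fintype.card ι) :
    ∃ (c : Fin 2 → ι) (a : Fin 2 × Fin 3 → α) (P : Fin 2 × Fin 3 → Finset ι) (d : Fin 3 → α),
      c 0 ≠ c 1 ∧ (∀ r, Function.Injective (fun k => a (r, k))) ∧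
      (∀ r, Finset.univ.image (fun k => a (r, k)) ∈ E (c r)) ∧
      (∀ p q, p ≠ q → Disjoint (P p) (P q)) ∧ (∀ r p, c r ∉ P p) ∧
      ∀ r k, Rch (a (r, k)) (P (r, k)) (d k) := by
  classical
  set L := Real.logb 2 (Fintype.card α) with hLdef
  have hcardR : (3:ℝ) ≤ Fintype.card α := by exact_mod_cast hn
  have hL1 : 1 ≤ L := by
    rw [hLdef, Real.le_logb_iff_rpow_le (by norm_num) (by linarith)]
    norm_num; linarith
  have hs0 : 0 < s := by
    rcases Nat.eq_zero_or_pos s with h | h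
    · subst h; simp at hs; linarith
    · exact h
  have hms : 0 < m * s := by positivity
  set t := Fintype.card ι with htdef
  have htR : 24 * ((m:ℝ) * s) ≤ t := by exact_mod_cast ht
  have htpos : (0:ℝ) < t := by exact_mod_cast (by omega : 0 < t)
  obtain ⟨V, φ, hV2, hφ, hφ0, hVin, hexp⟩ := exists_expander E h3 δ hn hδ
  rw [← hLdef, ← htdef] at hφ
  -- lower bounds for φ
  have hφs : 4 * (t:ℝ) ≤ φ * s := by
    have h1 : t * (4 * L) ≤ t * (δ * s) := mul_le_mul_of_nonneg_left hs htpos.le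
    have h2 : (δ * t) * s ≤ (φ * L) * s := mul_le_mul_of_nonneg_right hφ (by positivity)
    refine le_of_mul_le_mul_right (a := L) ?_ (by linarith)
    linarith
  have hφ2 : 2 ≤ φ := by
    have hm0R : (1:ℝ) ≤ m := by exact_mod_cast hm0
    have h1 : (s:ℝ) ≤ m * s := by nlinarith [(Nat.cast_nonneg s : (0:ℝ) ≤ s)]
    have hsR : (0:ℝ) < s := by exact_mod_cast hs0
    by_contra hlt
    push Not at hlt
    nlinarith
  have hV2R : (2:ℝ) ≤ V.card := by exact_mod_cast hV2
  have hlogV : 1 ≤ Real.logb 2 V.card := by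
    rw [Real.le_logb_iff_rpow_le (by norm_num) (by linarith)]
    norm_num; linarith
  have hlogVL : Real.logb 2 V.card ≤ L := by
    apply Real.logb_le_logb_of_le (by norm_num) (by linarith)
    exact_mod_cast Finset.card_le_univ V
  have hVlt : V.card < inside E V := by
    have : (V.card : ℝ) < inside E V := by
      rw [hVin]
      have h1 : (V.card:ℝ) ≤ V.card * Real.logb 2 V.card := by nlinarith
      nlinarith
    exact_mod_cast this
  obtain ⟨c, hc, hce⟩ := exists_two_colors E h3 hdis V hVlt
  choose e heE heV using hce
  -- enumerate the edges
  have hen : ∀ r, ∃ a : Fin 3 → α, Function.Injective a ∧ Finset.univ.image a = e r := by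
    intro r
    let q := (e r).equivFinOfCardEq (h3 _ _ (heE r))
    refine ⟨fun k => (q.symm k).1, fun x y h => q.symm.injective (Subtype.ext h), ?_⟩
    ext x
    simp only [Finset.mem_image, Finset.mem_univ, true_and]
    constructor
    · rintro ⟨k, rfl⟩; exact (q.symm k).2
    · intro hx; exact ⟨q ⟨x, hx⟩, by simp⟩
  choose a' ha'inj ha'im using hen
  let a : Fin 2 × Fin 3 → α := fun p => a' p.1 p.2
  have haV : ∀ p, a p ∈ V := by
    intro p
    apply heV p.1
    rw [← ha'im]
    exact Finset.mem_image_of_mem _ (Finset.mem_univ _)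
  let R : Fin 2 × Fin 3 → Finset ι → Finset α := fun p S => V.filter (fun b => Rch (a p) S b)
  have hRa : ∀ p S, a p ∈ R p S := fun p S => Finset.mem_filter.2 ⟨haV p, hrefl _ _⟩
  have hRmono : ∀ p S T, S ⊆ T → R p S ⊆ R p T := by
    intro p S T hST x hx
    obtain ⟨h1, h2⟩ := Finset.mem_filter.1 hx
    exact Finset.mem_filter.2 ⟨h1, hmono _ _ _ _ hST h2⟩
  let f : Fin 2 × Fin 3 → Finset ι → ℝ := fun p S => Real.logb 2 (V.card / (R p S).card)
  have hRpos : ∀ p S, (0:ℝ) < (R p S).card := fun p S => by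
    exact_mod_cast Finset.card_pos.2 ⟨_, hRa p S⟩
  have hf0 : ∀ p S, 0 ≤ f p S := by
    intro p S
    apply Real.logb_nonneg (by norm_num)
    rw [one_le_div (hRpos p S)]
    exact_mod_cast Finset.card_le_card (Finset.filter_subset _ _)
  have hfmono : ∀ p S T, S ⊆ T → f p T ≤ f p S := by
    intro p S T hST
    apply Real.logb_le_logb_of_le (by norm_num)
    · have := hRpos p T
      positivity
    · have h1 : ((R p S).card : ℝ) ≤ (R p T).card := by
        exact_mod_cast Finset.card_le_card (hRmono p S T hST)
      have := hRpos p S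
      gcongr
  have hfL : ∀ p, f p ∅ ≤ L := by
    intro p
    refine le_trans ?_ hlogVL
    have h1 : (1:ℝ) ≤ (R p ∅).card := by exact_mod_cast Finset.card_pos.2 ⟨_, hRa p ∅⟩
    apply Real.logb_le_logb_of_le (by norm_num)
    · have := hRpos p ∅
      positivity
    · exact div_le_self (by positivity) h1
  have hfineq : ∀ p S, φ * f p S ≤ ∑ i ∈ S, (f p (S.erase i) - f p S)
      + ∑ i ∈ Sᶜ, (f p S - f p (insert i S)) := by
    intro p S
    refine reach_ineq E hdis V φ hexp (R p) (fun S => Finset.filter_subset _ _)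
      (fun S => ⟨_, hRa p S⟩) (hRmono p) ?_ (f p) (fun S => rfl) S
    intro S i hi e he heV u hu w hw huR
    exact Finset.mem_filter.2 ⟨heV hw, hstep _ _ u w i hi e he hu hw (Finset.mem_filter.1 huR).2⟩
  -- blocks
  have hemb : Nonempty ((Fin 2 × Fin 3) × Fin (m*s) ↪ ι) := by
    apply Function.Embedding.nonempty_of_card_le
    simp only [Fintype.card_prod, Fintype.card_fin]
    omega
  obtain ⟨g⟩ := hemb
  let B : Fin 2 × Fin 3 → Finset ι := fun p => Finset.univ.image (fun x => g (p, x))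
  have hBcard : ∀ p, (B p).card = m * s := by
    intro p
    rw [Finset.card_image_of_injective]
    · simp
    · intro x y h
      have := g.injective h
      simpa using this
  have hBdis : ∀ p q, p ≠ q → Disjoint (B p) (B q) := by
    intro p q hpq
    rw [Finset.disjoint_left]
    intro x hx hy
    simp only [B, Finset.mem_image, Finset.mem_univ, true_and] at hx hy
    obtain ⟨x1, rfl⟩ := hx
    obtain ⟨x2, h2⟩ := hy
    have := g.injective h2
    exact hpq (Prod.ext_iff.1 this).1.symm
  let U : Finset ι := Finset.univ.biUnion B
  have hUcard : U.card ≤ 6 * (m * s) := by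
    refine Finset.card_biUnion_le.trans ?_
    simp [hBcard]
  -- averages
  have hdec : ∀ p, 2 ^ m * permSum (f p) (B p) ≤ (Fintype.card (Equiv.Perm ι)) * L := by
    intro p
    exact permSum_decay (f p) φ L hφ0 (hfL p) (hf0 p) (hfmono p) (hfineq p) s m hφs
      (by omega) (B p) (hBcard p)
  set K : ℝ := (Fintype.card (Equiv.Perm ι) : ℝ) with hK
  have hKpos : 0 < K := by
    rw [hK]; exact_mod_cast Fintype.card_pos
  have hdec' : ∀ p, permSum (f p) (B p) < K / 12 := by
    intro p
    have h1 := hdec p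
    have h2 : K * (12 * L) < K * 2 ^ m := mul_lt_mul_of_pos_left hm hKpos
    have h3 : (0:ℝ) < 2 ^ m := by positivity
    by_contra hcon
    push Not at hcon
    have := mul_le_mul_of_nonneg_left hcon h3.le
    linarith
  have hmem : ∀ r, permSum (fun S => if c r ∈ S then (1:ℝ) else 0) U ≤ K / 4 := by
    intro r
    have h1 := permSum_mem (c r) U
    rw [← hK, ← htdef] at h1
    have h2 : (U.card : ℝ) ≤ 6 * (m * s) := by exact_mod_cast hUcard
    have h3 : (U.card : ℝ) * K ≤ (t / 4) * K := mul_le_mul_of_nonneg_right (by linarith) hKpos.le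
    refine le_of_mul_le_mul_left (a := (t:ℝ)) ?_ htpos
    linarith
  have hexσ : ∃ σ : Equiv.Perm ι, (∑ p, f p ((B p).map σ.toEmbedding)) +
      ∑ r, (if c r ∈ U.map σ.toEmbedding then (1:ℝ) else 0) < 1 := by
    by_contra hcon
    push Not at hcon
    have h1 : ∑ σ : Equiv.Perm ι, (1:ℝ) ≤ ∑ σ : Equiv.Perm ι, ((∑ p, f p ((B p).map σ.toEmbedding)) +
      ∑ r, (if c r ∈ U.map σ.toEmbedding then (1:ℝ) else 0)) :=
      Finset.sum_le_sum fun σ _ => hcon σ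
    rw [Finset.sum_add_distrib, Finset.sum_comm, Finset.sum_comm (t := (Finset.univ : Finset (Fin 2)))] at h1
    have h2 : ∑ p, ∑ σ : Equiv.Perm ι, f p ((B p).map σ.toEmbedding) < ∑ p : Fin 2 × Fin 3, K / 12 :=
      Finset.sum_lt_sum_of_nonempty Finset.univ_nonempty fun p _ => hdec' p
    have h3 : ∑ r, ∑ σ : Equiv.Perm ι, (if c r ∈ U.map σ.toEmbedding then (1:ℝ) else 0)
        ≤ ∑ r : Fin 2, K / 4 :=
      Finset.sum_le_sum fun r _ => hmem r
    simp only [Finset.sum_const, Finset.card_univ, nsmul_eq_mul, Fintype.card_prod, Fintype.card_fin,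
      mul_one] at h1 h2 h3
    rw [← hK] at h1
    push_cast at h2 h3
    linarith
  obtain ⟨σ, hσ⟩ := hexσ
  have hs1 : 0 ≤ ∑ p, f p ((B p).map σ.toEmbedding) := Finset.sum_nonneg fun p _ => hf0 p _
  have hs2 : 0 ≤ ∑ r, (if c r ∈ U.map σ.toEmbedding then (1:ℝ) else 0) :=
    Finset.sum_nonneg fun r _ => by split_ifs <;> norm_num
  have hfl : ∀ p, f p ((B p).map σ.toEmbedding) < 1 := by
    intro p
    have := Finset.single_le_sum (f := fun p => f p ((B p).map σ.toEmbedding))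
      (fun p _ => hf0 p _) (Finset.mem_univ p)
    linarith
  have hcn : ∀ r, c r ∉ U.map σ.toEmbedding := by
    intro r hr
    have := Finset.single_le_sum (f := fun r => (if c r ∈ U.map σ.toEmbedding then (1:ℝ) else 0))
      (fun r _ => by split_ifs <;> norm_num) (Finset.mem_univ r)
    simp only [if_pos hr] at this
    linarith
  let P : Fin 2 × Fin 3 → Finset ι := fun p => (B p).map σ.toEmbedding
  have hbig : ∀ p, V.card < 2 * (R p (P p)).card := by
    intro p
    have h1 := hfl p
    have h2 := hRpos p (P p)
    have h3 : (V.card : ℝ) / (R p (P p)).card < 2 ^ (1:ℝ) := by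
      rw [← Real.logb_lt_iff_lt_rpow (by norm_num) (by positivity)]
      exact h1
    rw [Real.rpow_one, div_lt_iff₀ h2] at h3
    exact_mod_cast h3
  have hd : ∀ k : Fin 3, ∃ d, ∀ r, Rch (a (r, k)) (P (r, k)) d := by
    intro k
    have : ((R (0,k) (P (0,k))) ∩ (R (1,k) (P (1,k)))).Nonempty := by
      by_contra hemp
      rw [Finset.not_nonempty_iff_eq_empty, ← Finset.disjoint_iff_inter_eq_empty] at hemp
      have h1 := Finset.card_union_of_disjoint hemp
      have h2 : (R (0,k) (P (0,k)) ∪ R (1,k) (P (1,k))).card ≤ V.card :=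
        Finset.card_le_card (Finset.union_subset (Finset.filter_subset _ _) (Finset.filter_subset _ _))
      have h3 := hbig (0,k)
      have h4 := hbig (1,k)
      omega
    obtain ⟨d, hd⟩ := this
    obtain ⟨hd0, hd1⟩ := Finset.mem_inter.1 hd
    refine ⟨d, fun r => ?_⟩
    fin_cases r
    · exact (Finset.mem_filter.1 hd0).2
    · exact (Finset.mem_filter.1 hd1).2
  choose d hd using hd
  refine ⟨c, a, P, d, hc, ha'inj, ?_, ?_, ?_, fun r k => hd k r⟩
  · intro r
    have : Finset.univ.image (fun k => a (r,k)) = e r := ha'im r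
    rw [this]; exact heE r
  · intro p q hpq
    exact (Finset.disjoint_map _).2 (hBdis p q hpq)
  · intro r p hp
    apply hcn r
    exact Finset.map_subset_map.2 (Finset.subset_biUnion_of_mem B (Finset.mem_univ p)) hp

/-- `x` is a sum of at most `m` rows. -/
def Wt {n k : ℕ} (v : Fin n → Fin k → ZMod 2) (x : Fin k → ZMod 2) (m : ℕ) : Prop :=
  ∃ J : Finset (Fin n), J.card ≤ m ∧ x = ∑ i ∈ J, v i

lemma self_add {k : ℕ} (x : Fin k → ZMod 2) : x + x = 0 := by
  ext j
  exact CharTwo.add_self_eq_zero _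

lemma Wt.add {n k : ℕ} {v : Fin n → Fin k → ZMod 2} {x y : Fin k → ZMod 2} {p q : ℕ}
    (hx : Wt v x p) (hy : Wt v y q) : Wt v (x + y) (p + q) := by
  obtain ⟨J, hJ, rfl⟩ := hx
  obtain ⟨K, hK, rfl⟩ := hy
  refine ⟨symmDiff J K, ?_, ?_⟩
  · have : symmDiff J K ⊆ J ∪ K := by
      intro z hz
      rw [Finset.mem_symmDiff] at hz
      rw [Finset.mem_union]
      tauto
    exact (Finset.card_le_card this).trans ((Finset.card_union_le _ _).trans (by omega))
  · have h1 : ∑ i ∈ J, v i = ∑ i ∈ J \ K, v i + ∑ i ∈ J ∩ K, v i := by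
      rw [add_comm, Finset.sum_inter_add_sum_sdiff]
    have h2 : ∑ i ∈ K, v i = ∑ i ∈ K \ J, v i + ∑ i ∈ J ∩ K, v i := by
      rw [add_comm, Finset.inter_comm, Finset.sum_inter_add_sum_sdiff]
    have h3 : symmDiff J K = (J \ K) ∪ (K \ J) := rfl
    have h4 : Disjoint (J \ K) (K \ J) := disjoint_sdiff_sdiff
    rw [h3, Finset.sum_union h4, h1, h2, add_add_add_comm, self_add, add_zero]

lemma Wt.sum {n k : ℕ} {v : Fin n → Fin k → ZMod 2} {κ : Type*} [DecidableEq κ] (s : Finset κ)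
    (x : κ → Fin k → ZMod 2) (m : κ → ℕ) (h : ∀ p ∈ s, Wt v (x p) (m p)) :
    Wt v (∑ p ∈ s, x p) (∑ p ∈ s, m p) := by
  induction s using Finset.induction_on with
  | empty => exact ⟨∅, by simp, by simp⟩
  | insert a s ha ih =>
    rw [Finset.sum_insert ha, Finset.sum_insert ha]
    exact (h a (by simp)).add (ih fun p hp => h p (by simp [hp]))

lemma Wt.single {n k : ℕ} (v : Fin n → Fin k → ZMod 2) (a : Fin n) : Wt v (v a) 1 :=
  ⟨{a}, by simp, by simp⟩

lemma no_large {n k : ℕ} (δ : ℝ) (v : Fin n → Fin k → ZMod 2)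
    (H : Fin n → Finset (Finset (Fin n))) (hn : 3 ≤ n) (hδ0 : 0 < δ)
    (hL : IsBinaryLCC 3 δ v H) (I : Finset (Fin n))
    (hmin : ∀ Q : Finset {i // i ∈ I}, ∀ m, Wt v (∑ i ∈ Q, v i) m → Q.card ≤ m)
    (s m : ℕ) (hs : 4 * Real.logb 2 n ≤ δ * s)
    (hm0 : 1 ≤ m) (hm : 12 * Real.logb 2 n < 2 ^ m)
    (ht : 24 * (m * s) ≤ I.card) : False := by
  classical
  obtain ⟨-, h3, hdis, hcard, hrel⟩ := hL
  let Rch : Fin n → Finset {i // i ∈ I} → Fin n → Prop := fun a S b =>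
    ∃ S' ⊆ S, Wt v (v a + v b + ∑ i ∈ S', v i) S'.card
  obtain ⟨c, a, P, d, hc, hinj, hE, hPd, hcP, hR⟩ := core (ι := {i // i ∈ I}) (α := Fin n)
    (fun i => H i) (fun i => h3 i) (fun i => hdis i) δ hδ0 (by simpa using hn)
    (fun i => by simpa using hcard i) Rch
    (by
      intro a S
      exact ⟨∅, by simp, ∅, by simp, by simp [self_add]⟩)
    (by
      rintro a b S T hST ⟨S', hS', hw⟩
      exact ⟨S', hS'.trans hST, hw⟩)
    (by
      rintro a S u w i hi e he hu hw ⟨S', hS', hW⟩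
      have hi' : i ∉ S' := fun h => hi (hS' h)
      by_cases huw : u = w
      · subst huw
        exact ⟨S', hS'.trans (Finset.subset_insert _ _), hW⟩
      refine ⟨insert i S', Finset.insert_subset_insert _ hS', ?_⟩
      rw [Finset.card_insert_of_notMem hi', Finset.sum_insert hi']
      have hce := h3 i e he
      have hw' : w ∈ e.erase u := Finset.mem_erase.2 ⟨Ne.symm huw, hw⟩
      have h1 : ((e.erase u).erase w).card = 1 := by
        rw [Finset.card_erase_of_mem hw', Finset.card_erase_of_mem hu, hce]
      obtain ⟨z, hz⟩ := Finset.card_eq_one.1 h1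
      have h2 := hrel i e he
      rw [← Finset.add_sum_erase e v hu, ← Finset.add_sum_erase _ v hw', hz, Finset.sum_singleton] at h2
      have h4 := hW.add (Wt.single v z)
      convert h4 using 1
      rw [h2]
      have e1 := self_add (v w)
      calc _ = v a + v u + ∑ i ∈ S', v i + v z + (v w + v w) := by abel
        _ = _ := by rw [e1, add_zero])
    s m (by simpa using hs) hm0 (by simpa using hm) (by simpa using ht)
  choose P' hP'sub hP'W using hR
  let P2 : Fin 2 × Fin 3 → Finset {i // i ∈ I} := fun p => P' p.1 p.2
  have hP2 : ∀ p, P2 p ⊆ P p := fun p => hP'sub p.1 p.2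
  have hP2d : ∀ p q, p ≠ q → Disjoint (P2 p) (P2 q) := fun p q hpq =>
    Finset.disjoint_of_subset_left (hP2 p) (Finset.disjoint_of_subset_right (hP2 q) (hPd p q hpq))
  have hW := Wt.sum (v := v) (Finset.univ : Finset (Fin 2 × Fin 3))
    (fun p => v (a p) + v (d p.2) + ∑ i ∈ P2 p, v i) (fun p => (P2 p).card)
    (fun p _ => hP'W p.1 p.2)
  let U := Finset.univ.biUnion P2
  have hUc : U.card = ∑ p, (P2 p).card := Finset.card_biUnion fun p _ q _ h => hP2d p q h
  have hUs : ∑ i ∈ U, v i = ∑ p, ∑ i ∈ P2 p, v i :=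
    Finset.sum_biUnion fun p _ q _ h => hP2d p q h
  have hcU : ∀ r, c r ∉ U := by
    intro r hr
    obtain ⟨p, _, hp⟩ := Finset.mem_biUnion.1 hr
    exact hcP r p (hP2 p hp)
  have hva : ∀ r, ∑ k, v (a (r, k)) = v (c r) := by
    intro r
    rw [hrel _ _ (hE r), Finset.sum_image (fun x _ y _ h => hinj r h)]
  have h0 : c 0 ∉ insert (c 1) U := by
    rw [Finset.mem_insert]
    rintro (h | h)
    · exact hc h
    · exact hcU 0 h
  have key := hmin (insert (c 0) (insert (c 1) U)) U.card (by
    rw [hUc]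
    convert hW using 1
    rw [Finset.sum_insert h0, Finset.sum_insert (hcU 1), hUs, Finset.sum_add_distrib,
      Finset.sum_add_distrib, Fintype.sum_prod_type (fun p => v (a p)),
      Fintype.sum_prod_type (fun p : Fin 2 × Fin 3 => v (d p.2)), Fin.sum_univ_two, Fin.sum_univ_two,
      hva, hva, self_add, add_zero, add_assoc])
  rw [Finset.card_insert_of_notMem h0, Finset.card_insert_of_notMem (hcU 1)] at key
  omega

lemma exists_min_rep {n k : ℕ} (v : Fin n → Fin k → ZMod 2)
    (hspan : Submodule.span (ZMod 2) (Set.range v) = ⊤) (x : Fin k → ZMod 2) :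
    ∃ I : Finset (Fin n), x = ∑ i ∈ I, v i ∧
      ∀ Q : Finset {i // i ∈ I}, ∀ m, Wt v (∑ i ∈ Q, v i) m → Q.card ≤ m := by
  classical
  have hex : ∃ m, ∃ I : Finset (Fin n), I.card = m ∧ x = ∑ i ∈ I, v i := by
    have hx : x ∈ Submodule.span (ZMod 2) (Set.range v) := by rw [hspan]; trivial
    obtain ⟨c, hc⟩ := (Submodule.mem_span_range_iff_exists_fun (ZMod 2)).1 hx
    refine ⟨_, Finset.univ.filter (fun i => c i = 1), rfl, ?_⟩
    rw [← hc, Finset.sum_filter]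
    apply Finset.sum_congr rfl
    intro i _
    have : ∀ z : ZMod 2, z = 0 ∨ z = 1 := by decide
    rcases this (c i) with h | h <;> simp [h]
  obtain ⟨I, hI, hIx⟩ := Nat.find_spec hex
  refine ⟨I, hIx, ?_⟩
  intro Q m hQ
  by_contra hlt
  push Not at hlt
  let Q' : Finset (Fin n) := Q.map (Function.Embedding.subtype _)
  have hQ'I : Q' ⊆ I := by
    intro z hz
    obtain ⟨y, _, rfl⟩ := Finset.mem_map.1 hz
    exact y.2
  have hQ's : ∑ i ∈ Q', v i = ∑ i ∈ Q, v i := by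
    simp [Q', Finset.sum_map]
  have hQ'c : Q'.card = Q.card := Finset.card_map _
  have h1 : Wt v (∑ i ∈ I \ Q', v i) (I \ Q').card := ⟨_, le_rfl, rfl⟩
  obtain ⟨J, hJ, hJx⟩ := h1.add hQ
  rw [← hQ's, Finset.sum_sdiff hQ'I, ← hIx] at hJx
  have h2 := Finset.card_sdiff_add_card_eq_card hQ'I
  exact Nat.find_min hex (m := J.card) (by omega) ⟨J, rfl, hJx⟩

end LCCProof

/-- There is an absolute constant `C > 0` such that for any binary linear
`(3,δ)`-LCC with rows `v i`, every `x ∈ F₂ᵏ` is the sum of at most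
`C · δ⁻² · log₂ n · log₂ log₂ n` of the rows `v i` (covering radius bound
for the dual code). -/
theorem stmt1 :
    ∃ C : ℝ, 0 < C ∧
      ∀ (n k : ℕ) (δ : ℝ) (v : Fin n → Fin k → ZMod 2)
        (H : Fin n → Finset (Finset (Fin n))),
        3 ≤ n → 1 ≤ k → 0 < δ → δ < 1 → IsBinaryLCC 3 δ v H →
        ∀ x : Fin k → ZMod 2, ∃ I : Finset (Fin n),
          (I.card : ℝ) ≤ C * δ⁻¹ ^ 2 * Real.logb 2 n * Real.logb 2 (Real.logb 2 n) ∧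
          x = ∑ i ∈ I, v i := by
  refine ⟨1320, by norm_num, ?_⟩
  intro n k δ v H hn _ hδ0 hδ1 hLCC x
  obtain ⟨I, hIx, hmin⟩ := LCCProof.exists_min_rep v hLCC.1 x
  refine ⟨I, ?_, hIx⟩
  by_contra hcon
  push Not at hcon
  set L := Real.logb 2 n with hL
  set M := Real.logb 2 L with hM
  have hnR : (3:ℝ) ≤ n := by exact_mod_cast hn
  have hL1 : 3/2 ≤ L := by
    have h9 : Real.logb 2 8 ≤ Real.logb 2 ((n:ℝ)^2) :=
      Real.logb_le_logb_of_le (by norm_num) (by norm_num) (by nlinarith)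
    have h8 : Real.logb 2 8 = 3 := by
      rw [show (8:ℝ) = 2 ^ (3:ℕ) by norm_num, Real.logb_pow, Real.logb_self_eq_one (by norm_num)]
      norm_num
    rw [Real.logb_pow, h8] at h9
    push_cast at h9
    linarith
  have hM1 : 1/2 ≤ M := by
    have h9 : Real.logb 2 2 ≤ Real.logb 2 (L^2) :=
      Real.logb_le_logb_of_le (by norm_num) (by norm_num) (by nlinarith)
    rw [Real.logb_pow, Real.logb_self_eq_one (by norm_num)] at h9
    push_cast at h9
    linarith
  have hLM : L = 2 ^ M := by
    rw [hM, Real.rpow_logb (by norm_num) (by norm_num) (by linarith)]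
  set s := ⌈4 * L / δ⌉₊ with hs
  set m := ⌈M⌉₊ + 4 with hm
  have hs1 : 4 * L / δ ≤ s := Nat.le_ceil _
  have hs2 : (s:ℝ) < 4 * L / δ + 1 := Nat.ceil_lt_add_one (by positivity)
  have hm2 : (m:ℝ) < M + 5 := by
    have := Nat.ceil_lt_add_one (a := M) (by linarith)
    rw [hm]; push_cast; linarith
  refine LCCProof.no_large δ v H hn hδ0 hLCC I hmin s m ?_ (by omega) ?_ ?_
  · rw [div_le_iff₀ hδ0] at hs1
    linarith
  · have h1 : L ≤ 2 ^ ⌈M⌉₊ := by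
      rw [← Real.rpow_natCast]
      rw [hLM]
      exact Real.rpow_le_rpow_of_exponent_le (by norm_num) (Nat.le_ceil _)
    rw [hm, pow_add]
    linarith
  · have hd1 : 1 ≤ δ⁻¹ := (one_le_inv₀ hδ0).2 hδ1.le
    have hs3 : (s:ℝ) ≤ 5 * L * δ⁻¹ := by
      rw [div_eq_mul_inv] at hs2
      nlinarith
    have hm3 : (m:ℝ) ≤ 11 * M := by linarith
    have h1 : (m:ℝ) * s ≤ (11 * M) * (5 * L * δ⁻¹) := by
      apply mul_le_mul hm3 hs3 (by positivity) (by linarith)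
    have h2 : δ⁻¹ ≤ δ⁻¹ ^ 2 := by nlinarith
    have h3 : L * M * δ⁻¹ ≤ L * M * δ⁻¹ ^ 2 := mul_le_mul_of_nonneg_left h2 (by nlinarith)
    have h4 : 24 * ((m:ℝ) * s) ≤ I.card := by nlinarith
    exact_mod_cast h4
end

section
/- Let c₀ > 0 be a rainbow-cycle constant. Let n ≥ 3, δ ∈ (0,1), and let M ∈ F_2^{n×k} with rows v_1,…,v_n be (together with matchings H_1,…,H_n) a binary linear (3,δ)-LCC of block length n and dimension k. Let T ⊆ [n] be any set with |T| ≥ 2·c₀·δ^{-1}·log₂ n·log₂log₂ n, and let W ⊆ [n] be the set of indices j ∈ [n] for which there exists a finite multiset T' of elements of [n] containing j, with |T'| ≤ |T| (counting multiplicity), such that Σ_{t∈T} v_t = Σ_{t∈T'} v_t in F_2^k (the sum over T' counted with multiplicity). Then |W| ≥ (δ/2)·n. -/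
/-- `c₀ > 0` is a rainbow-cycle constant: for every `N ≥ 3`, every finite index
set (modeled as `Fin τ`), every `N`-element vertex set `V`, and every assignment
of a matching `M t` of `2`-element subsets of `V` to each index `t`, if
`Σ_t |M t| ≥ c₀·N·log₂ N·log₂ log₂ N` then some nonempty subfamily, with one
edge chosen per index, has empty symmetric difference (equivalently, every
vertex lies in an even number of the chosen edges): a rainbow cycle. -/
def IsRainbowCycleConst (c₀ : ℝ) : Prop :=
  ∀ (N : ℕ), 3 ≤ N →
    ∀ (τ : ℕ) (V : Type) [Fintype V] [DecidableEq V], Fintype.card V = N →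
      ∀ M : Fin τ → Finset (Finset V),
        (∀ t, ∀ e ∈ M t, e.card = 2) →
        (∀ t, ∀ e ∈ M t, ∀ e' ∈ M t, e ≠ e' → Disjoint e e') →
        c₀ * N * Real.logb 2 N * Real.logb 2 (Real.logb 2 N) ≤
          ((∑ t : Fin τ, (M t).card : ℕ) : ℝ) →
        ∃ S : Finset (Fin τ), S.Nonempty ∧ ∃ e : Fin τ → Finset V,
          (∀ t ∈ S, e t ∈ M t) ∧
          ∀ x : V, Even ((S.filter fun t => x ∈ e t).card)

/-- For a binary linear `(3,δ)`-LCC and any `T ⊆ [n]` of size at least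
`2·c₀·δ⁻¹·log₂ n·log₂ log₂ n`, the set `W` of indices `j` appearing in some
multiset `T'` with `|T'| ≤ |T|` and `Σ_{t∈T} v t = Σ_{t∈T'} v t` has size at
least `(δ/2)·n`. -/
theorem stmt2 (c₀ : ℝ) (hc₀ : 0 < c₀) (hrc : IsRainbowCycleConst c₀)
    (n k : ℕ) (δ : ℝ) (hn : 3 ≤ n) (hδ0 : 0 < δ) (hδ1 : δ < 1)
    (v : Fin n → Fin k → ZMod 2) (H : Fin n → Finset (Finset (Fin n)))
    (hlcc : IsBinaryLCC 3 δ v H)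
    (T : Finset (Fin n))
    (hT : 2 * c₀ * δ⁻¹ * Real.logb 2 n * Real.logb 2 (Real.logb 2 n) ≤ (T.card : ℝ)) :
    δ / 2 * n ≤
      (({j : Fin n | ∃ T' : Multiset (Fin n), j ∈ T' ∧ Multiset.card T' ≤ T.card ∧
          ∑ t ∈ T, v t = (T'.map v).sum}).ncard : ℝ) := by
  classical
  obtain ⟨-, hcard, hdisj, hsize, hsum⟩ := hlcc
  by_contra hlt
  push Not at hlt
  set Ws : Set (Fin n) := {j : Fin n | ∃ T' : Multiset (Fin n), j ∈ T' ∧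
    Multiset.card T' ≤ T.card ∧ ∑ t ∈ T, v t = (T'.map v).sum} with hWs
  set W : Finset (Fin n) := Ws.toFinset with hW
  have hWc : Ws.ncard = W.card := Set.ncard_eq_toFinset_card' Ws
  rw [hWc] at hlt
  have hpick : ∃ p : Finset (Fin n) → Fin n, ∀ e : Finset (Fin n), e.Nonempty → p e ∈ e := by
    refine ⟨fun e => if h : e.Nonempty then h.choose else ⟨0, by omega⟩, ?_⟩
    intro e he
    simp only [he, dif_pos]
    exact he.choose_spec
  obtain ⟨p, hp⟩ := hpick
  have hpm : ∀ i, ∀ e ∈ H i, p e ∈ e := fun i e he =>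
    hp e (Finset.card_pos.mp (by rw [hcard i e he]; norm_num))
  have hec : ∀ i, ∀ e ∈ H i, (e.erase (p e)).card = 2 := fun i e he => by
    rw [Finset.card_erase_of_mem (hpm i e he), hcard i e he]
  -- good hyperedges
  let G : Fin n → Finset (Finset (Fin n)) := fun i => (H i).filter (fun e => Disjoint e W)
  have hG : ∀ i, δ / 2 * n ≤ ((G i).card : ℝ) := by
    intro i
    have h1 : ((H i).filter (fun e => ¬ Disjoint e W)).card ≤ W.card := by
      refine Finset.card_le_card_of_injOn (fun e => p (e ∩ W)) ?_ ?_
      · intro e he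
        have he' := Finset.mem_filter.mp (Finset.mem_coe.mp he)
        exact (Finset.mem_inter.mp
          (hp (e ∩ W) (Finset.not_disjoint_iff_nonempty_inter.mp he'.2))).2
      · intro e he e' he' heq
        have h2 := Finset.mem_filter.mp (Finset.mem_coe.mp he)
        have h3 := Finset.mem_filter.mp (Finset.mem_coe.mp he')
        have h4 := (Finset.mem_inter.mp
          (hp (e ∩ W) (Finset.not_disjoint_iff_nonempty_inter.mp h2.2))).1
        have h5 := (Finset.mem_inter.mp
          (hp (e' ∩ W) (Finset.not_disjoint_iff_nonempty_inter.mp h3.2))).1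
        by_contra hne
        have heq' : p (e ∩ W) = p (e' ∩ W) := heq
        rw [heq'] at h4
        exact Finset.disjoint_left.mp (hdisj i e h2.1 e' h3.1 hne) h4 h5
    have h2 : (G i).card + ((H i).filter (fun e => ¬ Disjoint e W)).card = (H i).card :=
      Finset.card_filter_add_card_filter_not _
    have h3 := hsize i
    have h1' : (((H i).filter (fun e => ¬ Disjoint e W)).card : ℝ) ≤ W.card := by
      exact_mod_cast h1
    have h2' : ((G i).card : ℝ) + ((H i).filter (fun e => ¬ Disjoint e W)).card
      = (H i).card := by exact_mod_cast h2
    linarith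
  let f : Fin T.card ↪o Fin n := T.orderEmbOfFin rfl
  have hf : Finset.univ.map f.toEmbedding = T := Finset.map_orderEmbOfFin_univ T rfl
  let M : Fin T.card → Finset (Finset (Fin n)) := fun t =>
    (G (f t)).image (fun e => e.erase (p e))
  have hGH : ∀ i, ∀ e ∈ G i, e ∈ H i := fun i e he => (Finset.mem_filter.mp he).1
  have hMc : ∀ t, (M t).card = (G (f t)).card := by
    intro t
    apply Finset.card_image_of_injOn
    intro e he e' he' heq
    by_contra hne
    have h1 := hdisj _ e (hGH _ _ he) e' (hGH _ _ he') hne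
    have h2 := hec _ e (hGH _ _ he)
    obtain ⟨x, hx⟩ := Finset.card_pos.mp (by rw [h2]; norm_num : 0 < (e.erase (p e)).card)
    have heq' : e.erase (p e) = e'.erase (p e') := heq
    have hx' := hx
    rw [heq'] at hx'
    exact Finset.disjoint_left.mp h1 (Finset.mem_of_mem_erase hx) (Finset.mem_of_mem_erase hx')
  obtain ⟨S, hS, e, heM, heven⟩ := hrc n hn T.card (Fin n) (Fintype.card_fin n) M
    (by
      intro t e he
      obtain ⟨g, hg, rfl⟩ := Finset.mem_image.mp he
      exact hec _ g (hGH _ _ hg))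
    (by
      intro t e he e' he' hne
      obtain ⟨g, hg, rfl⟩ := Finset.mem_image.mp he
      obtain ⟨g', hg', rfl⟩ := Finset.mem_image.mp he'
      have : g ≠ g' := fun h => hne (by rw [h])
      exact Finset.disjoint_of_subset_left (Finset.erase_subset _ _)
        (Finset.disjoint_of_subset_right (Finset.erase_subset _ _)
          (hdisj _ g (hGH _ _ hg) g' (hGH _ _ hg') this)))
    (by
      have h1 : (T.card : ℝ) * (δ / 2 * n) ≤ ((∑ t : Fin T.card, (M t).card : ℕ) : ℝ) := by
        push_cast
        calc (T.card : ℝ) * (δ / 2 * n) = ∑ t : Fin T.card, (δ / 2 * n : ℝ) := by simp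
          _ ≤ _ := Finset.sum_le_sum (fun t _ => by rw [hMc]; exact hG _)
      refine le_trans ?_ h1
      have h2 := mul_le_mul_of_nonneg_right hT (by positivity : (0 : ℝ) ≤ δ / 2 * n)
      refine le_trans (le_of_eq ?_) h2
      field_simp)
  have hex : ∀ t, ∃ g, t ∈ S → g ∈ G (f t) ∧ g.erase (p g) = e t := by
    intro t
    by_cases ht : t ∈ S
    · obtain ⟨g, hg, hge⟩ := Finset.mem_image.mp (heM t ht)
      exact ⟨g, fun _ => ⟨hg, hge⟩⟩
    · exact ⟨∅, fun h => absurd h ht⟩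
  choose g hg using hex
  have hcancel : ∑ t ∈ S, ∑ a ∈ e t, v a = 0 := by
    have h1 : ∀ t ∈ S, ∑ a ∈ e t, v a = ∑ a, if a ∈ e t then v a else 0 := by
      intro t _
      simp
    rw [Finset.sum_congr rfl h1, Finset.sum_comm]
    refine Finset.sum_eq_zero (fun a _ => ?_)
    rw [← Finset.sum_filter, Finset.sum_const]
    obtain ⟨m, hm⟩ := heven a
    rw [hm]
    ext j
    simp only [Pi.smul_apply, Pi.zero_apply, nsmul_eq_mul]
    push_cast
    rw [CharTwo.add_self_eq_zero, zero_mul]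
  have hSsum : ∑ t ∈ S, v (f t) = ∑ t ∈ S, v (p (g t)) := by
    have h1 : ∀ t ∈ S, v (f t) = ∑ a ∈ e t, v a + v (p (g t)) := by
      intro t ht
      obtain ⟨h2, h3⟩ := hg t ht
      rw [hsum _ _ (hGH _ _ h2), ← h3, Finset.sum_erase_add _ _ (hpm _ _ (hGH _ _ h2))]
    rw [Finset.sum_congr rfl h1, Finset.sum_add_distrib, hcancel, zero_add]
  obtain ⟨t, ht⟩ := hS
  have hmem : p (g t) ∈ Ws := by
    refine ⟨(Finset.univ \ S).val.map f + S.val.map (fun t => p (g t)), ?_, ?_, ?_⟩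
    · exact Multiset.mem_add.mpr (Or.inr (Multiset.mem_map.mpr ⟨t, ht, rfl⟩))
    · have := Finset.card_sdiff_add_card_eq_card (Finset.subset_univ S)
      simp only [Multiset.card_add, Multiset.card_map, Finset.card_val]
      rw [this]
      simp
    · have h1 : ∑ t ∈ T, v t = ∑ t, v (f t) := by
        conv_lhs => rw [← hf]
        rw [Finset.sum_map]
        rfl
      rw [h1, ← Finset.sum_sdiff (Finset.subset_univ S), hSsum]
      simp only [Multiset.map_add, Multiset.map_map, Multiset.sum_add]
      rfl
  obtain ⟨h2, -⟩ := hg t ht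
  exact Finset.disjoint_left.mp (Finset.mem_filter.mp h2).2 (hpm _ _ (hGH _ _ h2))
    (Set.mem_toFinset.mpr hmem)
end
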